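/- Let m ≥ 1 and W ⊆ {0,1,…,m}. If W is not one of the boundary cases, then the automorphism group of the abelian code C(3,m,W) is a subgroup of the affine general linear group AGL(m,3), acting on the coordinate set F_3^m by maps x ↦ Ax + b with A an invertible m×m matrix over F_3 and b ∈ F_3^m. If W is one of the boundary cases, then the automorphism group of C(3,m,W) is the full symmetric group S_{3^m}. -/

import Mathlib

open Matrix

/-- The automorphism group of a binary code of length `|I|` (as a set of coordinate
permutations): those permutations of the index set that map the code onto itself. -/
def codeAut {I : Type} (C : Set (I → ZMod 2)) : Set (Equiv.Perm I) :=
  { π | (fun c => c ∘ ⇑π.symm) '' C = C }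

/-- The abelian code `C(n, m, W)`: binary vectors indexed by `(Z_n)^m` whose finite-field
DFT (with respect to a primitive `n`-th root of unity `α` in a field `K` of characteristic 2)
vanishes at every frequency `j` whose Hamming weight lies outside `W`. -/
def abelianCode (n m : ℕ) [NeZero n] (W : Set ℕ) (K : Type) [Field K] (α : K) :
    Set ((Fin m → ZMod n) → ZMod 2) :=
  { a | ∀ j : Fin m → ZMod n, hammingNorm j ∉ W →
      ∑ i : Fin m → ZMod n, (if a i = 1 then (1 : K) else 0) * α ^ (∑ k, i k * j k).val = 0 }

/-- The four boundary cases of weight sets: `∅` (zero code), `{0}` (repetition code),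
`{1,…,m}` (single parity check code), `{0,1,…,m}` (full space). -/
def BoundaryW (m : ℕ) (W : Set ℕ) : Prop :=
  W = ∅ ∨ W = {0} ∨ W = Set.Icc 1 m ∨ W = Set.Iic m

/-- The affine general linear group `AGL(m, 3)`, realized as the set of permutations of
`F_3^m` of the form `x ↦ A x + b` with `A` invertible. -/
def aglSet (m : ℕ) : Set (Equiv.Perm (Fin m → ZMod 3)) :=
  { f | ∃ (A : Matrix (Fin m) (Fin m) (ZMod 3)) (b : Fin m → ZMod 3),
      IsUnit A ∧ ∀ x, f x = A.mulVec x + b }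



namespace HamFus

abbrev Fn := ℕ → ℕ → ℤ

/-- shift in the first variable -/
def E1 : Module.End ℤ Fn where
  toFun Φ := fun a b => Φ (a+1) b
  map_add' _ _ := rfl
  map_smul' _ _ := rfl

/-- shift in the second variable -/
def E2 : Module.End ℤ Fn where
  toFun Φ := fun a b => Φ a (b+1)
  map_add' _ _ := rfl
  map_smul' _ _ := rfl

/-- shift in both variables -/
def Zs : Module.End ℤ Fn where
  toFun Φ := fun a b => Φ (a+1) (b+1)
  map_add' _ _ := rfl
  map_smul' _ _ := rfl

/-- step operator at a nonzero coordinate -/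
def opA : Module.End ℤ Fn := E1 + E2 + Zs
/-- step operator at a zero coordinate -/
def opB : Module.End ℤ Fn := 1 + (2:ℤ) • Zs

lemma opA_apply (Φ : Fn) (a b : ℕ) :
    opA Φ a b = Φ (a+1) b + Φ a (b+1) + Φ (a+1) (b+1) := rfl
lemma opB_apply (Φ : Fn) (a b : ℕ) : opB Φ a b = Φ a b + 2 * Φ (a+1) (b+1) := rfl
lemma Zs_apply (Φ : Fn) (a b : ℕ) : Zs Φ a b = Φ (a+1) (b+1) := rfl

lemma comm_AZ : Commute opA Zs := by
  ext Φ a b; simp [opA_apply, Zs_apply]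
lemma comm_AB : Commute opA opB := by
  unfold opB
  exact (Commute.one_right _).add_right (comm_AZ.smul_right _)
lemma comm_BZ : Commute opB Zs := by
  unfold opB
  exact (Commute.one_left _).add_left ((Commute.refl _).smul_left _)

/-- structure constants functional -/
def ev (i u : ℕ) (Φ : Fn) : ℤ := ((opA ^ i * opB ^ u) Φ) 0 0

lemma ev_add (i u : ℕ) (Φ Ψ : Fn) : ev i u (Φ + Ψ) = ev i u Φ + ev i u Ψ := by
  simp [ev]
lemma ev_sub (i u : ℕ) (Φ Ψ : Fn) : ev i u (Φ - Ψ) = ev i u Φ - ev i u Ψ := by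
  simp [ev]
lemma ev_smul (i u : ℕ) (c : ℤ) (Φ : Fn) : ev i u (c • Φ) = c * ev i u Φ := by
  unfold ev; rw [map_smul]; rfl
lemma ev_zero (i u : ℕ) : ev i u 0 = 0 := by simp [ev]

lemma ev_succ_left (i u : ℕ) (Φ : Fn) : ev (i+1) u Φ = ev i u (opA Φ) := by
  unfold ev
  rw [pow_succ, mul_assoc, (comm_AB.pow_right u).eq, ← mul_assoc]; rfl

lemma ev_succ_right (i u : ℕ) (Φ : Fn) : ev i (u+1) Φ = ev i u (opB Φ) := by
  unfold ev
  rw [pow_succ, ← mul_assoc]; rfl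

lemma ev_add_right (i u w : ℕ) (Φ : Fn) : ev i (u+w) Φ = ev i u ((opB^w) Φ) := by
  unfold ev
  rw [pow_add, ← mul_assoc]; rfl

lemma ev_00 (Φ : Fn) : ev 0 0 Φ = Φ 0 0 := by simp [ev]

/-- induction principle for `ev` -/
lemma ev_eq_zero_of (i u : ℕ) : ∀ (Φ : Fn), (∀ a b, a ≤ i + u → b ≤ i + u → Φ a b = 0) →
    ev i u Φ = 0 := by
  induction u with
  | zero =>
    induction i with
    | zero => intro Φ h; rw [ev_00]; exact h 0 0 (by simp) (by simp)
    | succ i ih =>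
      intro Φ h
      rw [ev_succ_left]
      apply ih
      intro a b ha hb
      rw [opA_apply, h _ _ (by omega) (by omega), h _ _ (by omega) (by omega),
        h _ _ (by omega) (by omega)]; rfl
  | succ u ih =>
    intro Φ h
    rw [ev_succ_right]
    apply ih
    intro a b ha hb
    rw [opB_apply, h _ _ (by omega) (by omega), h _ _ (by omega) (by omega)]; rfl

lemma ev_eq_zero_left (i u : ℕ) : ∀ (Φ : Fn), (∀ a b, a ≤ i + u → Φ a b = 0) →
    ev i u Φ = 0 := fun Φ h => ev_eq_zero_of i u Φ (fun a b ha _ => h a b ha)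

lemma ev_congr (i u : ℕ) (Φ Ψ : Fn) (h : ∀ a b, a ≤ i + u → b ≤ i + u → Φ a b = Ψ a b) :
    ev i u Φ = ev i u Ψ := by
  have := ev_eq_zero_of i u (Φ - Ψ) (fun a b ha hb => by simp [h a b ha hb])
  rw [ev_sub] at this; linarith

/-- transposition -/
def tr (Φ : Fn) : Fn := fun a b => Φ b a

lemma ev_tr (i u : ℕ) : ∀ Φ, ev i u (tr Φ) = ev i u Φ := by
  induction u with
  | zero =>
    induction i with
    | zero => intro Φ; rfl
    | succ i ih =>
      intro Φ
      rw [ev_succ_left, ev_succ_left, ← ih]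
      congr 1
      ext a b
      simp only [opA_apply, tr]; ring
  | succ u ih =>
    intro Φ
    rw [ev_succ_right, ev_succ_right, ← ih]
    congr 1

lemma ev_symm_mod2 (i u : ℕ) : ∀ Φ : Fn, (∀ a b, Φ a b = Φ b a) → ∃ k, ev i u Φ = Φ i i + 2 * k := by
  induction u with
  | zero =>
    induction i with
    | zero => intro Φ _; exact ⟨0, by rw [ev_00]; ring⟩
    | succ i ih =>
      intro Φ h
      obtain ⟨k, hk⟩ := ih (opA Φ) (fun a b => by
        simp only [opA_apply]; rw [h (a+1) b, h a (b+1), h (a+1) (b+1)]; ring)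
      refine ⟨k + Φ (i+1) i, ?_⟩
      rw [ev_succ_left, hk, opA_apply, h i (i+1)]; ring
  | succ u ih =>
    intro Φ h
    obtain ⟨k, hk⟩ := ih (opB Φ) (fun a b => by simp only [opB_apply]; rw [h a b, h (a+1) (b+1)])
    refine ⟨k + Φ (i+1) (i+1), ?_⟩
    rw [ev_succ_right, hk, opB_apply]; ring

/-- polynomial expansion of `(1+2X)^M` -/
lemma pow_two_expand {R : Type*} [CommRing R] (x : R) (v : ℕ) :
    ∃ q, (1 + 2 * x) ^ (2 ^ (v+1)) = 1 + 2 ^ (v+2) * (x + x^2) + 2 ^ (v+3) * q := by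
  induction v with
  | zero => exact ⟨0, by norm_num; ring⟩
  | succ v ih =>
    obtain ⟨q, hq⟩ := ih
    refine ⟨q + 2 ^ v * (x + x^2 + 2 * q)^2, ?_⟩
    rw [pow_succ 2 (v+1), pow_mul, hq]; ring

lemma odd_pow_expand {R : Type*} [CommRing R] (y : R) (t : ℕ) :
    ∃ q, (1 + 2 * y) ^ (2 * t + 1) = 1 + 2 * y + 4 * q * y := by
  induction t with
  | zero => exact ⟨0, by ring⟩
  | succ t ih =>
    obtain ⟨q, hq⟩ := ih
    refine ⟨q + (1 + 2 * y + 4 * q * y) * (1 + y) , ?_⟩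
    rw [show 2 * (t+1) + 1 = (2 * t + 1) + 2 by ring, pow_add, hq]; ring

/-- `M = 2^(v+1) * odd` -/
lemma pow_expand {R : Type*} [CommRing R] (x : R) (v t : ℕ) :
    ∃ q, (1 + 2 * x) ^ (2 ^ (v+1) * (2*t+1)) = 1 + 2 ^ (v+2) * (x + x^2) + 2 ^ (v+3) * q := by
  obtain ⟨q, hq⟩ := pow_two_expand x v
  obtain ⟨q', hq'⟩ := odd_pow_expand (2 ^ (v+1) * (x+x^2) + 2 ^ (v+2) * q) t
  refine ⟨q + q' * ((x+x^2) + 2 * q), ?_⟩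
  rw [pow_mul, hq]
  rw [show (1 + 2 ^ (v+2) * (x + x^2) + 2 ^ (v+3) * q : R)
    = 1 + 2 * (2 ^ (v+1) * (x+x^2) + 2 ^ (v+2) * q) by ring, hq']
  ring

lemma aeval_opB : opB = Polynomial.aeval Zs (1 + 2 * Polynomial.X : Polynomial ℤ) := by
  ext Φ a b
  simp [opB_apply, Zs_apply, two_mul]

lemma opB_odd (t : ℕ) (Φ : Fn) : ∃ Ψ : Fn,
    (opB ^ (2*t+1)) Φ = Φ + (2:ℤ) • Zs Φ + (4:ℤ) • Ψ := by
  obtain ⟨q, hq⟩ := odd_pow_expand (Polynomial.X : Polynomial ℤ) t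
  refine ⟨Polynomial.aeval Zs (q * Polynomial.X) Φ, ?_⟩
  rw [aeval_opB, ← map_pow, hq]
  rw [show (1 + 2 * Polynomial.X + 4 * q * Polynomial.X : Polynomial ℤ)
    = 1 + (2:ℤ) • Polynomial.X + (4:ℤ) • (q * Polynomial.X) by
      simp only [zsmul_eq_mul]; push_cast; ring]
  simp only [map_add, map_smul, map_one, Polynomial.aeval_X]
  rfl

lemma opB_even (v t : ℕ) (Φ : Fn) : ∃ Ψ : Fn,
    (opB ^ (2^(v+1) * (2*t+1))) Φ =
      Φ + (2^(v+2):ℤ) • (Zs Φ + Zs (Zs Φ)) + (2^(v+3):ℤ) • Ψ := by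
  obtain ⟨q, hq⟩ := pow_expand (Polynomial.X : Polynomial ℤ) v t
  refine ⟨Polynomial.aeval Zs q Φ, ?_⟩
  rw [aeval_opB, ← map_pow, hq]
  rw [show (1 + 2 ^ (v+2) * (Polynomial.X + Polynomial.X ^ 2) + 2^(v+3) * q : Polynomial ℤ)
    = 1 + (2^(v+2):ℤ) • (Polynomial.X + Polynomial.X * Polynomial.X) + (2^(v+3):ℤ) • q by
      simp only [zsmul_eq_mul]; push_cast; ring]
  simp only [map_add, map_smul, map_one, map_mul, Polynomial.aeval_X]
  rfl

lemma even_form (d : ℕ) (hd : Even d) (h0 : 0 < d) : ∃ v t, d = 2^(v+1) * (2*t+1) := by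
  obtain ⟨k, m, hm, rfl⟩ := Nat.exists_eq_two_pow_mul_odd h0.ne'
  obtain ⟨t, rfl⟩ := hm
  cases k with
  | zero => simp at hd
  | succ v => exact ⟨v, t, rfl⟩

/-- the tensor product -/
def tn (F G : ℕ → ℤ) : Fn := fun a b => F a * G b

lemma tn_split (F F' : ℕ → ℤ) :
    tn F F - tn F' F' = tn (F - F') (F - F') + (tn (F-F') F' + tr (tn (F-F') F')) := by
  ext a b; simp [tn, tr]; ring

lemma ev_tn_zero (i u : ℕ) (h G : ℕ → ℤ) (hh : ∀ a ≤ i + u, h a = 0) : ev i u (tn h G) = 0 :=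
  ev_eq_zero_left _ _ _ (fun a b ha => by simp [tn, hh a ha])

lemma err_odd {n m : ℕ} (hnm : n < m) (ho : Odd (m - n)) (F F' : ℕ → ℤ)
    (hF : ∀ a ≤ n, F a = F' a) (i : ℕ) (hi : i ≤ n) :
    ∃ k, ev i (m-i) (tn F F) - ev i (m-i) (tn F' F') = 2 * (F (i+1) - F' (i+1))^2 + 4 * k := by
  obtain ⟨t, ht⟩ := ho
  have hh : ∀ a ≤ i + (n-i), (F - F') a = 0 := fun a ha => by
    simp [hF a (by omega)]
  rw [← ev_sub, tn_split, ev_add, ev_add, ev_tr]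
  rw [show m - i = (n - i) + (2*t+1) by omega, ev_add_right, ev_add_right]
  obtain ⟨Ψ, h1⟩ := opB_odd t (tn (F - F') (F - F'))
  obtain ⟨Ψ', h2⟩ := opB_odd t (tn (F - F') F')
  rw [h1, h2]
  simp only [ev_add, ev_smul, ev_tn_zero i (n-i) (F-F') _ hh]
  obtain ⟨k, hk⟩ := ev_symm_mod2 i (n-i) (Zs (tn (F-F') (F-F'))) (fun a b => by
    simp [Zs_apply, tn]; ring)
  rw [hk]
  refine ⟨k + ev i (n-i) Ψ + ev i (n-i) (Zs (tn (F-F') F')) + 2 * ev i (n-i) Ψ', ?_⟩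
  simp [Zs_apply, tn]; ring

lemma err_even {n m : ℕ} (hnm : n < m) (ho : Even (m - n)) : ∃ v : ℕ, ∀ (F F' : ℕ → ℤ)
    (_ : ∀ a ≤ n, F a = F' a) (i : ℕ) (_ : i ≤ n),
    ∃ k, ev i (m-i) (tn F F) - ev i (m-i) (tn F' F') =
      2^(v+2) * ((F (i+1) - F' (i+1))^2 + (F (i+2) - F' (i+2))^2) + 2^(v+3) * k := by
  obtain ⟨v, t, ht⟩ := even_form _ ho (by omega)
  refine ⟨v, fun F F' hF i hi => ?_⟩
  have hh : ∀ a ≤ i + (n-i), (F - F') a = 0 := fun a ha => by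
    simp [hF a (by omega)]
  rw [← ev_sub, tn_split, ev_add, ev_add, ev_tr]
  rw [show m - i = (n - i) + (2^(v+1) * (2*t+1)) by omega, ev_add_right, ev_add_right]
  obtain ⟨Ψ, h1⟩ := opB_even v t (tn (F - F') (F - F'))
  obtain ⟨Ψ', h2⟩ := opB_even v t (tn (F - F') F')
  rw [h1, h2]
  simp only [ev_add, ev_smul, ev_tn_zero i (n-i) (F-F') _ hh]
  obtain ⟨k, hk⟩ := ev_symm_mod2 i (n-i) (Zs (tn (F-F') (F-F'))) (fun a b => by
    simp [Zs_apply, tn]; ring)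
  obtain ⟨k', hk'⟩ := ev_symm_mod2 i (n-i) (Zs (Zs (tn (F-F') (F-F')))) (fun a b => by
    simp [Zs_apply, tn]; ring)
  rw [hk, hk']
  refine ⟨k + k' + ev i (n-i) Ψ + (ev i (n-i) (Zs (tn (F-F') F')) +
     ev i (n-i) (Zs (Zs (tn (F-F') F')))) + 2 * ev i (n-i) Ψ', ?_⟩
  simp [Zs_apply, tn]; ring

/-- G4, even case -/
lemma g4_even {i N m : ℕ} (hi : i ≤ N) (hN : N ≤ m) (he : Even (m - N)) (Φ : Fn) :
    ∃ k, ev i (m-i) Φ = ev i (N-i) Φ + 4 * k := by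
  rcases Nat.eq_zero_or_pos (m - N) with h0 | h0
  · exact ⟨0, by rw [show m = N by omega]; ring⟩
  · obtain ⟨v, t, ht⟩ := even_form _ he h0
    obtain ⟨Ψ, h⟩ := opB_even v t Φ
    rw [show m - i = (N - i) + (2^(v+1) * (2*t+1)) by omega, ev_add_right, h]
    simp only [ev_add, ev_smul]
    exact ⟨2^v * (ev i (N-i) (Zs Φ) + ev i (N-i) (Zs (Zs Φ))) + 2^(v+1) * ev i (N-i) Ψ, by ring⟩

/-- G4, odd case -/
lemma g4_odd {i N m : ℕ} (hi : i ≤ N) (ho : Odd (m - N)) (Φ : Fn)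
    (hΦ : ∀ a b, Φ a b = Φ b a) :
    ∃ k, ev i (m-i) Φ = ev i (N-i) Φ + 2 * Φ (i+1) (i+1) + 4 * k := by
  obtain ⟨t, ht⟩ := ho
  obtain ⟨Ψ, h⟩ := opB_odd t Φ
  rw [show m - i = (N - i) + (2*t+1) by omega, ev_add_right, h]
  obtain ⟨k, hk⟩ := ev_symm_mod2 i (N-i) (Zs Φ) (fun a b => by
    simp only [Zs_apply]; exact hΦ _ _)
  simp only [ev_add, ev_smul, hk, Zs_apply]
  exact ⟨k + ev i (N-i) Ψ, by ring⟩

/-- triangular evaluation -/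
lemma ev_tri (i u : ℕ) : ∀ Φ : Fn, (∀ a b, a ≤ i + u → b ≤ i + u → i < a + b → Φ a b = 0) →
    ev i u Φ = ∑ a ∈ Finset.range (i+1), (i.choose a : ℤ) * Φ a (i - a) := by
  induction u with
  | zero =>
    induction i with
    | zero => intro Φ _; simp [ev_00]
    | succ i ih =>
      intro Φ h
      rw [ev_succ_left, ih]
      · rw [Finset.sum_congr rfl (g := fun a => (i.choose a : ℤ) * Φ (a+1) (i + 1 - (a+1)) +
          (i.choose a : ℤ) * Φ a (i + 1 - a))]
        · rw [Finset.sum_add_distrib, Finset.sum_range_succ' _ (i+1)]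
          simp only [Nat.choose_succ_succ, Nat.cast_add, add_mul, Finset.sum_add_distrib]
          rw [Finset.sum_range_succ' (fun a => (i.choose a : ℤ) * Φ a (i + 1 - a)) i]
          rw [Finset.sum_range_succ (fun a => (i.choose (a+1) : ℤ) * Φ (a+1) (i + 1 - (a+1))) i]
          simp
          ring
        · intro a ha
          rw [Finset.mem_range] at ha
          rw [opA_apply, h (a+1) (i-a+1) (by omega) (by omega) (by omega),
            show i + 1 - (a+1) = i - a by omega, show i + 1 - a = i - a + 1 by omega]
          ring
      · intro a b ha hb hab
        rw [opA_apply, h _ _ (by omega) (by omega) (by omega), h _ _ (by omega) (by omega) (by omega),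
          h _ _ (by omega) (by omega) (by omega)]; rfl
  | succ u ih =>
    intro Φ h
    rw [ev_succ_right, ih]
    · apply Finset.sum_congr rfl
      intro a ha
      rw [Finset.mem_range] at ha
      rw [opB_apply, h (a+1) (i-a+1) (by omega) (by omega) (by omega)]; ring
    · intro a b ha hb hab
      rw [opB_apply, h _ _ (by omega) (by omega) (by omega), h _ _ (by omega) (by omega) (by omega)]; rfl

lemma ev_even_left (i u : ℕ) : ∀ Φ : Fn, (∀ a b, a ≤ i → Φ a b = 0) → ∃ k, ev i u Φ = 2 * k := by
  induction u with
  | zero => intro Φ h; exact ⟨0, by rw [ev_eq_zero_left i 0 Φ (fun a b ha => h a b (by omega))]; rfl⟩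
  | succ u ih =>
    intro Φ h
    obtain ⟨k, hk⟩ := ih Φ h
    refine ⟨k + ev i u (Zs Φ), ?_⟩
    rw [ev_succ_right, show opB Φ = Φ + (2:ℤ) • Zs Φ from rfl, ev_add, ev_smul, hk]; ring

lemma ev_div (i u : ℕ) : ∀ Φ : Fn, (∀ a b, a ≤ i + 1 → Φ a b = 0) → ∃ k, ev i u Φ = 4 * k := by
  induction u with
  | zero => intro Φ h; exact ⟨0, by rw [ev_eq_zero_left i 0 Φ (fun a b ha => h a b (by omega))]; rfl⟩
  | succ u ih =>
    intro Φ h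
    obtain ⟨k, hk⟩ := ih Φ h
    obtain ⟨k', hk'⟩ := ev_even_left i u (Zs Φ) (fun a b ha => by
      rw [Zs_apply]; exact h _ _ (by omega))
    refine ⟨k + k', ?_⟩
    rw [ev_succ_right, show opB Φ = Φ + (2:ℤ) • Zs Φ from rfl, ev_add, ev_smul, hk, hk']; ring

end HamFus


namespace HamFus

lemma ev_row1 (N : ℕ) : ∀ Φ : Fn, (∀ a b, 2 ≤ a → Φ a b = 0) →
    ev N 0 Φ = Φ 0 N + N * (Φ 1 (N-1) + Φ 1 N) := by
  induction N with
  | zero => intro Φ _; simp [ev_00]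
  | succ N ih =>
    intro Φ h
    rw [ev_succ_left, ih]
    · simp only [opA_apply]
      have h2 : ∀ b, Φ (1+1) b = 0 := fun b => h _ b (by omega)
      simp only [h2]
      rcases N with _ | N
      · simp; ring
      · simp; ring
    · intro a b ha
      rw [opA_apply, h _ _ (by omega), h _ _ (by omega), h _ _ (by omega)]; rfl

lemma ev_diag (N : ℕ) : ∀ Φ : Fn, (∀ a b, a ≤ N → b ≤ N → a + b < 2 * N → Φ a b = 0) →
    ev N 0 Φ = Φ N N := by
  induction N with
  | zero => intro Φ _; simp [ev_00]
  | succ N ih =>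
    intro Φ h
    rw [ev_succ_left, ih]
    · rw [opA_apply, h (N+1) N (by omega) (by omega) (by omega),
        h N (N+1) (by omega) (by omega) (by omega)]; ring
    · intro a b ha hb hab
      rw [opA_apply, h _ _ (by omega) (by omega) (by omega), h _ _ (by omega) (by omega) (by omega),
        h _ _ (by omega) (by omega) (by omega)]; rfl

lemma ev0_mod4 (u : ℕ) : ∀ Φ : Fn, ∃ k, ev 0 u Φ = Φ 0 0 + 2 * u * Φ 1 1 + 4 * k := by
  induction u with
  | zero => intro Φ; exact ⟨0, by simp [ev_00]⟩
  | succ u ih =>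
    intro Φ
    obtain ⟨k, hk⟩ := ih (opB Φ)
    rw [ev_succ_right, hk]
    simp only [opB_apply]
    refine ⟨k + u * Φ 2 2, ?_⟩
    push_cast; ring

lemma ev1_mod4 (u : ℕ) (Φ : Fn) : ∃ k, ev 1 u Φ =
    Φ 1 0 + Φ 0 1 + Φ 1 1 + 2 * u * (Φ 2 1 + Φ 1 2 + Φ 2 2) + 4 * k := by
  obtain ⟨k, hk⟩ := ev0_mod4 u (opA Φ)
  exact ⟨k, by rw [show (1:ℕ) = 0 + 1 from rfl, ev_succ_left, hk]; simp only [opA_apply]⟩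

lemma ev_mod2 (i u : ℕ) (Φ : Fn) : ∃ k, ev i u Φ = ev i 0 Φ + 2 * k := by
  induction u generalizing Φ with
  | zero => exact ⟨0, by ring⟩
  | succ u ih =>
    obtain ⟨k, hk⟩ := ih Φ
    rw [ev_succ_right, show opB Φ = Φ + (2:ℤ) • Zs Φ from rfl, ev_add, ev_smul, hk]
    exact ⟨k + ev i u (Zs Φ), by ring⟩

/-- computable version of `ev`, zero part -/
def evb : ℕ → Fn → ℤ
  | 0, Φ => Φ 0 0
  | u+1, Φ => evb u (fun a b => Φ a b + 2 * Φ (a+1) (b+1))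

/-- computable version of `ev` -/
def evc : ℕ → ℕ → Fn → ℤ
  | 0, u, Φ => evb u Φ
  | i+1, u, Φ => evc i u (fun a b => Φ (a+1) b + Φ a (b+1) + Φ (a+1) (b+1))

lemma ev_eq_evc (i u : ℕ) : ∀ Φ, ev i u Φ = evc i u Φ := by
  induction i with
  | zero =>
    induction u with
    | zero => intro Φ; rw [ev_00]; rfl
    | succ u ih => intro Φ; rw [ev_succ_right, ih]; rfl
  | succ i ih => intro Φ; rw [ev_succ_left, ih]; rfl

/-- bi-invariance -/
def Inv (r : ℕ → ℕ → Prop) (Φ : Fn) : Prop :=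
  ∀ a a' b b', r a a' → r b b' → Φ a b = Φ a' b'

/-- The abstract combinatorial properties of the fusion relation. -/
structure Coh (m : ℕ) (r : ℕ → ℕ → Prop) : Prop where
  equiv : Equivalence r
  zero : ∀ j, r 0 j → j = 0
  conv : ∀ Φ, Inv r Φ → ∀ i j, i ≤ m → j ≤ m → r i j → ev i (m-i) Φ = ev j (m-j) Φ

open Classical in
/-- indicator of a class -/
noncomputable def ind (r : ℕ → ℕ → Prop) (c : ℕ) : ℕ → ℤ := fun a => if r c a then 1 else 0

variable {m : ℕ} {r : ℕ → ℕ → Prop}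

lemma ind_pos {c a : ℕ} (h : r c a) : ind r c a = 1 := if_pos h
lemma ind_neg {c a : ℕ} (h : ¬ r c a) : ind r c a = 0 := if_neg h
lemma ind_01 (c a : ℕ) : ind r c a = 0 ∨ ind r c a = 1 := by unfold ind; split_ifs <;> simp
lemma ind_one {c a : ℕ} (h : ind r c a ≠ 0) : r c a := by
  by_contra h'; exact h (ind_neg h')

lemma Coh.ind_inv (H : Coh m r) (c : ℕ) {a b : ℕ} (h : r a b) : ind r c a = ind r c b := by
  by_cases h1 : r c a
  · rw [ind_pos h1, ind_pos (H.equiv.trans h1 h)]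
  · rw [ind_neg h1, ind_neg (fun h2 => h1 (H.equiv.trans h2 (H.equiv.symm h)))]

lemma Coh.key_even (H : Coh m r) {i N : ℕ} (hi : i ≤ N) (hN : N ≤ m) (he : Even (m-N))
    (hr : r i N) (Φ : Fn) (hΦ : Inv r Φ) : ∃ k, ev i (N-i) Φ = ev N 0 Φ + 4 * k := by
  obtain ⟨k, hk⟩ := g4_even hi hN he Φ
  obtain ⟨k', hk'⟩ := g4_even le_rfl hN he Φ
  have := H.conv Φ hΦ i N (by omega) hN hr
  refine ⟨k' - k, ?_⟩
  rw [Nat.sub_self] at hk'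
  linarith

lemma Coh.key_even' (H : Coh m r) {i j N : ℕ} (hi : i ≤ N) (hj : j ≤ N) (hN : N ≤ m)
    (he : Even (m-N)) (hr : r i j) (Φ : Fn) (hΦ : Inv r Φ) :
    ∃ k, ev i (N-i) Φ = ev j (N-j) Φ + 4 * k := by
  obtain ⟨k, hk⟩ := g4_even hi hN he Φ
  obtain ⟨k', hk'⟩ := g4_even hj hN he Φ
  have := H.conv Φ hΦ i j (by omega) (by omega) hr
  exact ⟨k' - k, by linarith⟩

lemma Coh.key_odd (H : Coh m r) {i N : ℕ} (hi : i ≤ N) (hN : N ≤ m) (ho : Odd (m-N))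
    (hr : r i N) (Φ : Fn) (hΦ : Inv r Φ) (hs : ∀ a b, Φ a b = Φ b a) :
    ∃ k, ev i (N-i) Φ + 2 * Φ (i+1) (i+1) = ev N 0 Φ + 2 * Φ (N+1) (N+1) + 4 * k := by
  obtain ⟨k, hk⟩ := g4_odd hi ho Φ hs
  obtain ⟨k', hk'⟩ := g4_odd le_rfl ho Φ hs
  have := H.conv Φ hΦ i N (by omega) hN hr
  refine ⟨k' - k, ?_⟩
  rw [Nat.sub_self] at hk'
  linarith

/-! extension lemmas -/

/-- the class indicator with the value at zero modified -/
noncomputable def ind0 (r : ℕ → ℕ → Prop) (z c : ℕ) : ℕ → ℤ :=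
  fun a => if a = 0 then ind r c z else ind r c a

lemma ind0_01 (z c a : ℕ) : ind0 r z c a = 0 ∨ ind0 r z c a = 1 := by
  unfold ind0; split_ifs <;> exact ind_01 _ _

lemma Coh.ind0_inv (H : Coh m r) (z c : ℕ) : Inv r (tn (ind0 r z c) (ind0 r z c)) := by
  have key : ∀ a b, r a b → ind0 r z c a = ind0 r z c b := by
    intro a b h
    unfold ind0
    by_cases ha : a = 0
    · subst ha
      rw [H.zero b h]
    · by_cases hb : b = 0
      · subst hb; exact absurd (H.zero a (H.equiv.symm h)) ha
      · rw [if_neg ha, if_neg hb]; exact H.ind_inv c h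
  intro a a' b b' h1 h2
  simp only [tn]; rw [key _ _ h1, key _ _ h2]

lemma per_shift (G : ℕ → ℤ) (hG : ∀ a, G (a+3) = G a) (i u : ℕ) :
    ev (i+4) u (tn G G) = ev (i+1) (u+3) (tn G G) := by
  have h : opA (opA (opA (opA (tn G G)))) = opA (opB (opB (opB (tn G G)))) := by
    ext a b
    simp only [opA_apply, opB_apply, tn]
    have h3 : ∀ x, G (x+1+1+1) = G x := hG
    simp only [h3]
    ring
  rw [show i + 4 = i+1+1+1+1 from rfl, ev_succ_left, ev_succ_left, ev_succ_left, ev_succ_left, h,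
    ev_succ_left, ev_succ_right, ev_succ_right, ev_succ_right]
  congr 1
  have hAB : ∀ Φ, opA (opB Φ) = opB (opA Φ) := fun Φ => by
    have := congrArg (fun f => f Φ) comm_AB.eq
    exact this
  rw [hAB, hAB, hAB]

lemma const_shift (g : ℤ) (i u : ℕ) :
    ev (i+1) u (tn (fun _ => g) (fun _ => g)) = ev i (u+1) (tn (fun _ => g) (fun _ => g)) := by
  rw [ev_succ_left, ev_succ_right]
  congr 1
  ext a b
  simp only [opA_apply, opB_apply, tn]; ring

lemma two_pow_cancel (v : ℕ) (x y k k' : ℤ)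
    (h : 2^(v+2) * x + 2^(v+3) * k = 2^(v+2) * y + 2^(v+3) * k') : ∃ l, x = y + 2 * l := by
  refine ⟨k' - k, ?_⟩
  have h2 : (2:ℤ)^(v+2) ≠ 0 := by positivity
  apply mul_left_cancel₀ h2
  rw [pow_succ 2 (v+2)] at h
  linarith

lemma sq_par {x y : ℤ} (hx : x = 0 ∨ x = 1) (hy : y = 0 ∨ y = 1) (l : ℤ) (h : (x-y)^2 = 2 * l) :
    x = y := by
  rcases hx with rfl | rfl <;> rcases hy with rfl | rfl <;> simp at h ⊢ <;> omega

/-- periodic on `[1,n]` -/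
def Per (r : ℕ → ℕ → Prop) (n : ℕ) : Prop := ∀ a, 1 ≤ a → a + 3 ≤ n → r a (a+3)

lemma Coh.per_agree (H : Coh m r) {n : ℕ} (hP : Per r n) (c : ℕ) :
    ∀ a ≤ n, ind0 r 3 c a = ind0 r 3 c (a % 3) := by
  intro a
  induction a using Nat.strong_induction_on with
  | _ a ih =>
    intro ha
    by_cases h : a < 3
    · rw [Nat.mod_eq_of_lt h]
    · obtain ⟨b, rfl⟩ : ∃ b, a = b + 3 := ⟨a - 3, by omega⟩
      rw [Nat.add_mod_right, ← ih b (by omega) (by omega)]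
      by_cases hb : b = 0
      · subst hb; simp [ind0]
      · simp only [ind0, if_neg hb]
        rw [if_neg (by omega)]
        exact (H.ind_inv c (hP b (by omega) ha)).symm

lemma Coh.per_conv (H : Coh m r) {n : ℕ} (hn : n < m) (hP : Per r n) (c i : ℕ) (hi : 1 ≤ i)
    (hin : i + 3 ≤ n) :
    ev (i+3) (m-(i+3)) (tn (ind0 r 3 c) (ind0 r 3 c)) = ev i (m-i) (tn (ind0 r 3 c) (ind0 r 3 c)) ∧
    ev (i+3) (m-(i+3)) (tn (fun a => ind0 r 3 c (a % 3)) (fun a => ind0 r 3 c (a % 3))) =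
     ev i (m-i) (tn (fun a => ind0 r 3 c (a % 3)) (fun a => ind0 r 3 c (a % 3))) := by
  constructor
  · exact H.conv _ (H.ind0_inv 3 c) _ _ (by omega) (by omega) (H.equiv.symm (hP i hi hin))
  · have := per_shift (fun a => ind0 r 3 c (a % 3)) (fun a => by simp) (i-1) (m-(i+3))
    rw [show i - 1 + 4 = i + 3 by omega, show i - 1 + 1 = i by omega,
      show m - (i+3) + 3 = m - i by omega] at this
    exact this

lemma Coh.ext_per (H : Coh m r) {n : ℕ} (hn : n < m) (hP : Per r n)
    (h5 : 5 ≤ n ∨ (n = 4 ∧ Odd (m-n))) : Per r (n+1) := by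
  intro a ha han
  by_cases h : a + 3 ≤ n
  · exact hP a ha h
  obtain rfl : n = a + 2 := by omega
  apply ind_one (r := r)
  have hag := H.per_agree hP a
  suffices ind0 r 3 a (a+2+1) = ind0 r 3 a ((a+2+1) % 3) by
    have h2 := hag a (by omega)
    rw [show a + 2 + 1 = a + 3 from rfl, Nat.add_mod_right, ← h2] at this
    simp only [ind0, if_neg (show a + 3 ≠ 0 by omega), if_neg (show a ≠ 0 by omega)] at this
    rw [this, ind_pos (H.equiv.refl a)]; norm_num
  rcases Nat.even_or_odd (m - (a+2)) with he | ho
  · obtain ⟨v, hv⟩ := err_even hn he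
    have hv' := hv (ind0 r 3 a) (fun b => ind0 r 3 a (b % 3)) hag
    obtain ⟨i, rfl⟩ : ∃ i, a = i + 2 := ⟨a - 2, by
      rcases h5 with h5 | ⟨h5, h6⟩
      · omega
      · exact absurd he (Nat.not_even_iff_odd.2 h6)⟩
    have hi1 : 1 ≤ i := by
      rcases h5 with h5 | ⟨h5, h6⟩
      · omega
      · exact absurd he (Nat.not_even_iff_odd.2 h6)
    obtain ⟨k, hk⟩ := hv' i (by omega)
    obtain ⟨k', hk'⟩ := hv' (i+3) (by omega)
    obtain ⟨e1, e2⟩ := H.per_conv hn hP (i+2) i (by omega) (by omega)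
    rw [e1, e2, hk] at hk'
    obtain ⟨l, hl⟩ := two_pow_cancel _ _ _ _ _ hk'
    have z1 := hag (i+1) (by omega)
    have z2 := hag (i+2) (by omega)
    have z3 := hag (i+3+1) (by omega)
    simp only [z1, z2, z3, sub_self] at hl
    refine sq_par (ind0_01 _ _ _) (ind0_01 _ _ _) (-l) ?_
    rw [show i + 2 + 2 + 1 = i + 3 + 2 by ring]
    linarith
  · have hv := err_odd hn ho (ind0 r 3 a) (fun b => ind0 r 3 a (b % 3)) hag
    obtain ⟨i, rfl⟩ : ∃ i, a = i + 1 := ⟨a - 1, by omega⟩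
    have hi1 : 1 ≤ i := by
      rcases h5 with h5 | ⟨h5, h6⟩ <;> omega
    obtain ⟨k, hk⟩ := hv i (by omega)
    obtain ⟨k', hk'⟩ := hv (i+3) (by omega)
    obtain ⟨e1, e2⟩ := H.per_conv hn hP (i+1) i (by omega) (by omega)
    rw [e1, e2, hk] at hk'
    have z1 := hag (i+1) (by omega)
    simp only [z1, sub_self] at hk'
    refine sq_par (ind0_01 _ _ _) (ind0_01 _ _ _) (k - k') ?_
    rw [show i + 1 + 2 + 1 = i + 3 + 1 by ring]
    linarith

/-- constant on `[1,n]` -/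
def Cst (r : ℕ → ℕ → Prop) (n : ℕ) : Prop := ∀ a, 1 ≤ a → a ≤ n → r 1 a

lemma Coh.cst_agree (H : Coh m r) {n : ℕ} (hP : Cst r n) (c : ℕ) :
    ∀ a ≤ n, ind0 r 1 c a = ind r c 1 := by
  intro a ha
  by_cases h : a = 0
  · simp [ind0, h]
  · simp only [ind0, if_neg h]; exact (H.ind_inv c (hP a (by omega) ha)).symm

lemma Coh.cst_conv (H : Coh m r) {n : ℕ} (hn : n < m) (hP : Cst r n) (c i : ℕ) (hi : 1 ≤ i)
    (hin : i + 1 ≤ n) :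
    ev (i+1) (m-(i+1)) (tn (ind0 r 1 c) (ind0 r 1 c)) = ev i (m-i) (tn (ind0 r 1 c) (ind0 r 1 c)) ∧
    ev (i+1) (m-(i+1)) (tn (fun _ => ind r c 1) (fun _ => ind r c 1)) =
     ev i (m-i) (tn (fun _ => ind r c 1) (fun _ => ind r c 1)) := by
  constructor
  · exact H.conv _ (H.ind0_inv 1 c) _ _ (by omega) (by omega)
      (H.equiv.trans (H.equiv.symm (hP (i+1) (by omega) hin)) (hP i hi (by omega)))
  · rw [const_shift, show m - (i+1) + 1 = m - i by omega]

/-- common part: even distance -/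
lemma Coh.cst_even (H : Coh m r) {n : ℕ} (hn : n < m) (hP : Cst r n) (he : Even (m-n))
    (i : ℕ) (hi : 1 ≤ i) (hin : i + 1 ≤ n) :
    r 1 (i+3) := by
  apply ind_one (r := r)
  have hag := H.cst_agree hP 1
  obtain ⟨v, hv⟩ := err_even hn he
  have hv' := hv (ind0 r 1 1) (fun _ => ind r 1 1) hag
  obtain ⟨k, hk⟩ := hv' i (by omega)
  obtain ⟨k', hk'⟩ := hv' (i+1) (by omega)
  obtain ⟨e1, e2⟩ := H.cst_conv hn hP 1 i hi hin
  rw [e1, e2, hk] at hk'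
  obtain ⟨l, hl⟩ := two_pow_cancel _ _ _ _ _ hk'
  have z1 := hag (i+1) (by omega)
  rw [z1, show i + 1 + 1 = i + 2 from rfl, show i + 1 + 2 = i + 3 from rfl] at hl
  have := sq_par (x := ind0 r 1 1 (i+3)) (y := ind r 1 1) (ind0_01 _ _ _) (ind_01 _ _) (-l)
    (by linarith)
  simp only [ind0, if_neg (show i + 3 ≠ 0 by omega)] at this
  rw [this, ind_pos (H.equiv.refl 1)]; norm_num

lemma Coh.cst_odd (H : Coh m r) {n : ℕ} (hn : n < m) (hP : Cst r n) (he : Odd (m-n))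
    (h2 : 2 ≤ n) : r 1 (n+1) := by
  apply ind_one (r := r)
  have hag := H.cst_agree hP 1
  have hv := err_odd hn he (ind0 r 1 1) (fun _ => ind r 1 1) hag
  obtain ⟨i, rfl⟩ : ∃ i, n = i + 1 := ⟨n - 1, by omega⟩
  obtain ⟨k, hk⟩ := hv i (by omega)
  obtain ⟨k', hk'⟩ := hv (i+1) (by omega)
  obtain ⟨e1, e2⟩ := H.cst_conv hn hP 1 i (by omega) le_rfl
  rw [e1, e2, hk] at hk'
  have z1 := hag (i+1) (by omega)
  rw [z1] at hk'
  have := sq_par (x := ind0 r 1 1 (i+1+1)) (y := ind r 1 1) (ind0_01 _ _ _) (ind_01 _ _) (k-k')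
    (by linarith)
  simp only [ind0, if_neg (show i + 1 + 1 ≠ 0 by omega)] at this
  rw [this, ind_pos (H.equiv.refl 1)]; norm_num

lemma Coh.ext_cst (H : Coh m r) {n : ℕ} (hn : n < m) (hP : Cst r n)
    (h3 : 3 ≤ n ∨ (n = 2 ∧ Odd (m-n))) : Cst r (n+1) := by
  intro a ha han
  by_cases h : a ≤ n
  · exact hP a ha h
  obtain rfl : a = n + 1 := by omega
  rcases Nat.even_or_odd (m - n) with he | ho
  · have h3 : 3 ≤ n := by
      rcases h3 with h3 | ⟨_, h3⟩
      · exact h3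
      · exact absurd he (Nat.not_even_iff_odd.2 h3)
    have := H.cst_even hn hP he (n-2) (by omega) (by omega)
    rw [show n - 2 + 3 = n + 1 by omega] at this
    exact this
  · exact H.cst_odd hn hP ho (by rcases h3 with h3 | ⟨h3, _⟩ <;> omega)

lemma Coh.cst_all (H : Coh m r) {n : ℕ} (hnm : n ≤ m) (hP : Cst r n) (h3 : 3 ≤ n) : Cst r m := by
  induction hnm using Nat.decreasingInduction with
  | self => exact hP
  | of_succ k hk ih => exact ih (H.ext_cst hk hP (Or.inl h3)) (by omega)

lemma Coh.per_all (H : Coh m r) {n : ℕ} (hnm : n ≤ m) (hP : Per r n) (h3 : 5 ≤ n) : Per r m := by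
  induction hnm using Nat.decreasingInduction with
  | self => exact hP
  | of_succ k hk ih => exact ih (H.ext_per hk hP (Or.inl h3)) (by omega)

lemma Coh.after12 (H : Coh m r) (hm : 2 ≤ m) (h : r 1 2) : Cst r m ∨ (r 1 4 ∧ 4 ≤ m) := by
  have h2 : Cst r 2 := by
    intro a h1 h2
    interval_cases a
    · exact H.equiv.refl 1
    · exact h
  rcases eq_or_lt_of_le hm with rfl | hm
  · exact Or.inl h2
  rcases Nat.even_or_odd (m - 2) with he | ho
  · right
    have := H.cst_even hm h2 he 1 le_rfl le_rfl
    refine ⟨this, ?_⟩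
    obtain ⟨k, hk⟩ := he; omega
  · left
    exact H.cst_all (n := 3) (by omega) (H.ext_cst hm h2 (Or.inr ⟨rfl, ho⟩)) le_rfl

/-- numeric kernel for pattern exclusion -/
def pat (x y : ℕ) : Fn := fun a b => if (a = x ∨ a = y) ∧ (b = x ∨ b = y) then 1 else 0

lemma Coh.pattern (H : Coh m r) (hm : 6 ≤ m) (he : Even (m-6)) {i j c x y : ℕ} (hi : i ≤ 6)
    (hj : j ≤ 6) (hij : r i j) (hc : ∀ a ≤ 6, r c a ↔ (a = x ∨ a = y)) :
    ∃ k, evc i (6-i) (pat x y) = evc j (6-j) (pat x y) + 4 * k := by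
  have hI : Inv r (tn (ind r c) (ind r c)) := fun a a' b b' h1 h2 => by
    simp only [tn]; rw [H.ind_inv c h1, H.ind_inv c h2]
  obtain ⟨k, hk⟩ := H.key_even' hi hj hm he hij _ hI
  refine ⟨k, ?_⟩
  have e : ∀ a b, a ≤ 6 → b ≤ 6 → tn (ind r c) (ind r c) a b = pat x y a b := by
    intro a b ha hb
    simp only [tn, ind, pat, hc a ha, hc b hb]
    by_cases h1 : a = x ∨ a = y <;> by_cases h2 : b = x ∨ b = y <;> simp [h1, h2]
  rw [ev_congr i (6-i) _ (pat x y) (fun a b ha hb => e a b (by omega) (by omega)),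
    ev_congr j (6-j) _ (pat x y) (fun a b ha hb => e a b (by omega) (by omega)),
    ev_eq_evc, ev_eq_evc] at hk
  exact hk

lemma Coh.after14 (H : Coh m r) (hm : 4 ≤ m) (h14 : r 1 4) : Cst r m ∨ Per r m := by
  have h4 : Per r 4 := by
    intro a h1 h2
    obtain rfl : a = 1 := by omega
    exact h14
  rcases eq_or_lt_of_le hm with rfl | hm
  · exact Or.inr h4
  rcases Nat.even_or_odd (m - 4) with he | ho
  swap
  · right
    exact H.per_all (n := 5) (by omega) (H.ext_per hm h4 (Or.inr ⟨rfl, ho⟩)) le_rfl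
  have hm6 : 6 ≤ m := by obtain ⟨k, hk⟩ := he; omega
  have he6 : Even (m - 6) := by obtain ⟨k, hk⟩ := he; exact ⟨k-1, by omega⟩
  -- parity relation
  have par : ∀ c, (r c 5 ↔ r c 2) ↔ (r c 6 ↔ r c 3) := by
    intro c
    obtain ⟨v, hv⟩ := err_even hm he
    have hv' := hv (ind0 r 3 c) (fun b => ind0 r 3 c (b % 3)) (H.per_agree h4 c)
    obtain ⟨k, hk⟩ := hv' 1 (by omega)
    obtain ⟨k', hk'⟩ := hv' 4 (by omega)
    obtain ⟨e1, e2⟩ := H.per_conv hm h4 c 1 le_rfl le_rfl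
    rw [show 1 + 3 = 4 from rfl] at e1 e2
    rw [e1, e2, hk] at hk'
    obtain ⟨l, hl⟩ := two_pow_cancel _ _ _ _ _ hk'
    simp [ind0] at hl
    by_cases a5 : r c 5 <;> by_cases a2 : r c 2 <;> by_cases a6 : r c 6 <;> by_cases a3 : r c 3 <;>
      simp [ind, a5, a2, a6, a3] at hl ⊢ <;> omega
  have sy : ∀ {a b}, r a b → r b a := fun h => H.equiv.symm h
  have tra : ∀ {a b c}, r a b → r b c → r a c := fun h h' => H.equiv.trans h h'
  have rf : ∀ a, r a a := H.equiv.refl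
  by_cases h25 : r 2 5
  · right
    have h36 : r 3 6 := by
      have := (par 3).1 ⟨fun h => tra h (sy h25), fun h => tra h h25⟩
      exact this.2 (rf 3)
    refine H.per_all (n := 6) hm6 ?_ (by omega)
    intro a h1 h2
    obtain rfl | rfl | rfl : a = 1 ∨ a = 2 ∨ a = 3 := by omega
    exacts [h14, h25, h36]
  by_cases h23 : r 2 3
  · by_cases h12 : r 1 2
    · left
      refine H.cst_all (n := 3) (by omega) ?_ le_rfl
      intro a h1 h2
      obtain rfl | rfl | rfl : a = 1 ∨ a = 2 ∨ a = 3 := by omega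
      exacts [rf 1, h12, tra h12 h23]
    · exfalso
      have h56 : r 5 6 := by
        by_contra h
        have h52 : ¬ r 5 2 := fun h => h25 (sy h)
        have h53 : ¬ r 5 3 := fun h => h52 (tra h (sy h23))
        have := (par 5).2 ⟨fun h' => absurd h' h, fun h' => absurd h' h53⟩
        exact h52 (this.1 (rf 5))
      have hc : ∀ a ≤ 6, r 2 a ↔ (a = 2 ∨ a = 3) := by
        intro a ha
        interval_cases a
        · simp; intro h; exact absurd (H.zero _ (sy h)) (by norm_num)
        · simp; intro h; exact h12 (sy h)
        · simp [rf]
        · simp [h23]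
        · simp; intro h; exact h12 (sy (tra h (sy h14)))
        · simp [h25]
        · simp; intro h; exact h25 (tra h (sy h56))
      obtain ⟨k, hk⟩ := H.pattern hm6 he6 (i := 6) (j := 5) le_rfl (by norm_num) (sy h56) hc
      have c1 : evc 6 (6-6) (pat 2 3) = 20 := by decide +kernel
      have c2 : evc 5 (6-5) (pat 2 3) = 50 := by decide +kernel
      omega
  · exfalso
    have h26 : r 2 6 := by
      by_contra h
      have := (par 2).2 ⟨fun h' => absurd h' h, fun h' => absurd h' h23⟩
      exact h25 (this.2 (rf 2))
    have h35 : r 3 5 := by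
      by_contra h
      have h32 : ¬ r 3 2 := fun h => h23 (sy h)
      have h36 : ¬ r 3 6 := fun h => h32 (tra h (sy h26))
      have := (par 3).1 ⟨fun h' => absurd h' h, fun h' => absurd h' h32⟩
      exact h36 (this.2 (rf 3))
    by_cases h12 : r 1 2
    · have hc : ∀ a ≤ 6, r 3 a ↔ (a = 3 ∨ a = 5) := by
        intro a ha
        interval_cases a
        · simp; intro h; exact absurd (H.zero _ (sy h)) (by norm_num)
        · simp; intro h; exact h23 (sy (tra h h12))
        · simp; intro h; exact h23 (sy h)
        · simp [rf]
        · simp; intro h; exact h23 (sy (tra (tra h (sy h14)) h12))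
        · simp [h35]
        · simp; intro h; exact h23 (sy (tra h (sy h26)))
      obtain ⟨k, hk⟩ := H.pattern hm6 he6 (i := 5) (j := 3) (by norm_num) (by norm_num) (sy h35) hc
      have c1 : evc 5 (6-5) (pat 3 5) = 171 := by decide +kernel
      have c2 : evc 3 (6-3) (pat 3 5) = 169 := by decide +kernel
      omega
    · have hc : ∀ a ≤ 6, r 2 a ↔ (a = 2 ∨ a = 6) := by
        intro a ha
        interval_cases a
        · simp; intro h; exact absurd (H.zero _ (sy h)) (by norm_num)
        · simp; intro h; exact h12 (sy h)
        · simp [rf]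
        · simp [h23]
        · simp; intro h; exact h12 (sy (tra h (sy h14)))
        · simp [h25]
        · simp [h26]
      obtain ⟨k, hk⟩ := H.pattern hm6 he6 (i := 6) (j := 2) (by norm_num) (by norm_num) (sy h26) hc
      have c1 : evc 6 (6-6) (pat 2 6) = 31 := by decide +kernel
      have c2 : evc 2 (6-2) (pat 2 6) = 33 := by decide +kernel
      omega

end HamFus


namespace HamFus
variable {m : ℕ} {r : ℕ → ℕ → Prop}

/-- the antidiagonal test function -/
noncomputable def ad (r : ℕ → ℕ → Prop) (s : Finset ℕ) (c : ℕ) : Fn :=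
  fun x y => ∑ a ∈ s, ind r a x * ind r (c - a) y

/-- its truncation -/
def adT (s : Finset ℕ) (c : ℕ) : Fn := fun x y => if x + y = c ∧ x ∈ s then 1 else 0

/-- symmetric index set -/
def SymS (s : Finset ℕ) (c : ℕ) : Prop := ∀ a ∈ s, a ≤ c ∧ c - a ∈ s

lemma Coh.ad_inv (H : Coh m r) (s : Finset ℕ) (c : ℕ) : Inv r (ad r s c) := by
  intro a a' b b' h1 h2
  unfold ad
  apply Finset.sum_congr rfl
  intro x _
  rw [H.ind_inv x h1, H.ind_inv (c-x) h2]

lemma ad_symm (s : Finset ℕ) (c : ℕ) (hs : SymS s c) (x y : ℕ) : ad r s c x y = ad r s c y x := by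
  unfold ad
  refine Finset.sum_nbij' (fun a => c - a) (fun a => c - a) ?_ ?_ ?_ ?_ ?_
  · intro a ha; exact (hs a ha).2
  · intro a ha; exact (hs a ha).2
  · intro a ha; have := (hs a ha).1; omega
  · intro a ha; have := (hs a ha).1; omega
  · intro a ha; have := (hs a ha).1
    simp only [show c - (c - a) = a by omega]; ring

lemma Coh.ad_trunc (H : Coh m r) (s : Finset ℕ) (c N : ℕ) (hs : SymS s c)
    (hiso : ∀ a ∈ s, ∀ x ≤ N, r a x → x = a) :
    ∀ x y, x ≤ N → y ≤ N → ad r s c x y = adT s c x y := by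
  have hi : ∀ a ∈ s, ∀ x ≤ N, ind r a x = if x = a then 1 else 0 := by
    intro a ha x hx
    by_cases h : x = a
    · rw [if_pos h, h, ind_pos (H.equiv.refl a)]
    · rw [if_neg h, ind_neg (fun h' => h (hiso a ha x hx h'))]
  intro x y hx hy
  unfold ad adT
  rw [Finset.sum_congr rfl (g := fun a => if a = x then (if x + y = c then (1:ℤ) else 0) else 0)]
  · rw [Finset.sum_ite_eq']
    by_cases h1 : x ∈ s <;> by_cases h2 : x + y = c <;> simp [h1, h2]
  · intro a ha
    rw [hi a ha x hx, hi (c-a) (hs a ha).2 y hy]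
    have := (hs a ha).1
    by_cases h : x = a
    · subst h
      simp only [if_true, one_mul]
      congr 1
      simp only [eq_iff_iff]; omega
    · rw [if_neg h, if_neg (fun h' : a = x => h h'.symm)]; ring

lemma ad_ne_zero (s : Finset ℕ) (c x y : ℕ) (h : ad r s c x y ≠ 0) :
    ∃ a ∈ s, r a x ∧ r (c-a) y := by
  obtain ⟨a, ha, h⟩ := Finset.exists_ne_zero_of_sum_ne_zero h
  exact ⟨a, ha, ind_one (left_ne_zero_of_mul h), ind_one (right_ne_zero_of_mul h)⟩

lemma ev_adT_eq (s : Finset ℕ) (c u : ℕ) (hs : SymS s c) :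
    ev c u (adT s c) = ∑ a ∈ s, (c.choose a : ℤ) := by
  rw [ev_tri]
  · rw [← Finset.sum_subset (s₁ := s)]
    · apply Finset.sum_congr rfl
      intro a ha
      have := (hs a ha).1
      simp [adT, ha, this]
    · intro a ha
      have := (hs a ha).1
      simp; omega
    · intro a _ ha
      simp [adT, ha]
  · intro a b _ _ h
    simp only [adT]
    rw [if_neg (by omega)]

lemma ev_adT_gt (s : Finset ℕ) (c N u : ℕ) (h : c < N) : ev N u (adT s c) = 0 := by
  rw [ev_tri]
  · apply Finset.sum_eq_zero
    intro a ha
    simp only [Finset.mem_range] at ha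
    simp only [adT]
    rw [if_neg (by omega), mul_zero]
  · intro a b _ _ h
    simp only [adT]
    rw [if_neg (by omega)]

lemma ev_adT_one (s : Finset ℕ) (c u : ℕ) (hc : 5 ≤ c) :
    ∃ k, ev 1 u (adT s c) = 4 * k := by
  obtain ⟨k, hk⟩ := ev1_mod4 u (adT s c)
  refine ⟨k, ?_⟩
  rw [hk]
  have : ∀ x y, x + y ≤ 4 → adT s c x y = 0 := by
    intro x y h; simp only [adT]; rw [if_neg (by omega)]
  rw [this _ _ (by norm_num), this _ _ (by norm_num), this _ _ (by norm_num),
    this _ _ (by norm_num), this _ _ (by norm_num), this _ _ (by norm_num)]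
  ring

lemma symS_Icc (c k : ℕ) : SymS (Finset.Icc k (c-k)) c := by
  intro a ha
  simp only [Finset.mem_Icc] at ha ⊢
  omega

lemma symS_pair (c : ℕ) (hc : 2 ≤ c) : SymS {2, c-2} c := by
  intro a ha
  simp only [Finset.mem_insert, Finset.mem_singleton] at ha ⊢
  omega

lemma sum_choose1 (c : ℕ) (hc : 2 ≤ c) :
    ∃ k : ℤ, ∑ a ∈ Finset.Icc 1 (c-1), (c.choose a : ℤ) = 2 + 4 * k := by
  have h := Int.alternating_sum_range_choose (n := c)
  have h1 : ∑ a ∈ Finset.range (c+1), (c.choose a : ℤ) = 2^c := by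
    exact_mod_cast Nat.sum_range_choose c
  rw [Finset.sum_range_succ] at h1
  obtain ⟨d, rfl⟩ : ∃ d, c = d + 2 := ⟨c - 2, by omega⟩
  rw [Finset.range_eq_Ico, Finset.sum_eq_sum_Ico_succ_bot (by omega)] at h1
  have e : Finset.Icc 1 (d+2-1) = Finset.Ico (0+1) (d+2) := by
    ext x; simp; omega
  rw [e]
  refine ⟨2^d - 1, ?_⟩
  simp at h1 ⊢
  rw [pow_add] at h1
  linarith

lemma sum_choose2 (c : ℕ) (hc : 4 ≤ c) (he : Even c) :
    ∃ k : ℤ, ∑ a ∈ Finset.Icc 2 (c-2), (c.choose a : ℤ) = 2 + 4 * k := by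
  obtain ⟨k, hk⟩ := sum_choose1 c (by omega)
  have e : Finset.Icc 1 (c-1) = insert 1 (insert (c-1) (Finset.Icc 2 (c-2))) := by
    ext x; simp; omega
  rw [e, Finset.sum_insert (by simp; omega), Finset.sum_insert (by simp; omega)] at hk
  have h2 : c.choose (c-1) = c := by
    rw [Nat.choose_symm (by omega : 1 ≤ c)]; simp
  rw [h2, Nat.choose_one_right] at hk
  obtain ⟨d, rfl⟩ := he
  refine ⟨k - d, ?_⟩
  push_cast at hk ⊢
  linarith

lemma sum_pair (c : ℕ) (hc : 5 ≤ c) :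
    ∑ a ∈ ({2, c-2} : Finset ℕ), (c.choose a : ℤ) = c * (c-1) := by
  rw [Finset.sum_pair (by omega), Nat.choose_symm (by omega : 2 ≤ c)]
  have : 2 * c.choose 2 = c * (c-1) := by
    rw [Nat.choose_two_right]
    exact Nat.mul_div_cancel' (Nat.even_mul_pred_self c).two_dvd
  have h2 : (2 * c.choose 2 : ℤ) = c * ((c:ℤ)-1) := by
    have := congrArg (Nat.cast : ℕ → ℤ) this
    push_cast [show 1 ≤ c by omega] at this
    exact this
  linarith

lemma Coh.L1 (H : Coh m r) {c N : ℕ} (hc : 2 ≤ c) (hcN : c < N) (hN : N ≤ m) (he : Even (m-N))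
    (hr : r c N) (hiso : ∀ a, 1 ≤ a → a < c → ∀ x ≤ N, r a x → x = a) : False := by
  have ht := H.ad_trunc (Finset.Icc 1 (c-1)) c N (symS_Icc c 1) (fun a ha => by
    simp only [Finset.mem_Icc] at ha; exact hiso a (by omega) (by omega))
  obtain ⟨k, hk⟩ := H.key_even hcN.le hN he hr _ (H.ad_inv (Finset.Icc 1 (c-1)) c)
  rw [ev_congr _ _ _ _ (fun a b ha hb => ht a b (by omega) (by omega)),
    ev_congr N 0 _ _ (fun a b ha hb => ht a b (by omega) (by omega)),
    ev_adT_gt _ _ _ _ hcN, ev_adT_eq _ _ _ (symS_Icc c 1)] at hk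
  obtain ⟨k', hk'⟩ := sum_choose1 c hc
  omega

/-- the value of the square of the class of one -/
lemma sq_at_N {N : ℕ} (hN : 3 ≤ N) (H : Coh m r) (hr : r 1 N)
    (hiso : ∀ x ≤ N, r 1 x → x = 1 ∨ x = N) :
    ev N 0 (tn (ind r 1) (ind r 1)) = 2 * N + 1 := by
  let d1 : ℕ → ℤ := fun a => if a = 1 then 1 else 0
  let dN : ℕ → ℤ := fun a => if a = N then 1 else 0
  have e : ∀ x ≤ N, ind r 1 x = d1 x + dN x := by
    intro x hx
    simp only [d1, dN]
    by_cases h : r 1 x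
    · rw [ind_pos h]
      rcases hiso x hx h with h | h
      · rw [if_pos h, if_neg (by omega)]; rfl
      · rw [if_neg (by omega), if_pos h]; rfl
    · rw [ind_neg h, if_neg (fun h' : x = 1 => h (h' ▸ H.equiv.refl 1)),
        if_neg (fun h' : x = N => h (h' ▸ hr))]; rfl
  have e2 : ev N 0 (tn (ind r 1) (ind r 1)) =
     ev N 0 (tn d1 d1 + (tn d1 dN + tr (tn d1 dN)) + tn dN dN) := by
    apply ev_congr
    intro a b ha hb
    simp only [Pi.add_apply, tn, tr]
    rw [e a (by omega), e b (by omega)]; ring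
  rw [e2, ev_add, ev_add, ev_add, ev_tr, ev_row1 N (tn d1 d1), ev_row1 N (tn d1 dN), ev_diag]
  · simp [tn, d1, dN]
    rw [if_neg (by omega), if_neg (by omega), if_neg (by omega)]; ring
  · intro a b ha hb hab
    simp only [tn, dN]
    by_cases h : a = N
    · rw [if_neg (show b ≠ N by omega)]; ring
    · rw [if_neg h]; ring
  · intro a b ha; simp only [tn, d1]; rw [if_neg (by omega)]; ring
  · intro a b ha; simp only [tn, d1]; rw [if_neg (by omega)]; ring

lemma Coh.sq_inv (H : Coh m r) : Inv r (tn (ind r 1) (ind r 1)) := by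
  intro a a' b b' h1 h2
  simp only [tn]; rw [H.ind_inv 1 h1, H.ind_inv 1 h2]

lemma sq_at_1 (H : Coh m r) (u : ℕ) (h2 : ¬ r 1 2) :
    ∃ k, ev 1 u (tn (ind r 1) (ind r 1)) = 1 + 4 * k := by
  obtain ⟨k, hk⟩ := ev1_mod4 u (tn (ind r 1) (ind r 1))
  refine ⟨k, ?_⟩
  have h0 : ¬ r 1 0 := fun h => absurd (H.zero 1 (H.equiv.symm h)) (by norm_num)
  rw [hk]
  simp [tn, ind_neg h0, ind_neg h2, ind_pos (H.equiv.refl 1)]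

lemma Coh.L2 (H : Coh m r) {N : ℕ} (h3 : 3 ≤ N) (hN : N ≤ m) (he : Even (m-N))
    (hr : r 1 N) (hiso : ∀ x ≤ N, r 1 x → x = 1 ∨ x = N) : Even N := by
  obtain ⟨k, hk⟩ := H.key_even (by omega) hN he hr _ H.sq_inv
  obtain ⟨k', hk'⟩ := sq_at_1 H (N-1) (fun h => by have := hiso 2 (by omega) h; omega)
  rw [hk', sq_at_N h3 H hr hiso] at hk
  rw [Nat.even_iff]; omega

/-- even comparison between 1 and N for an antidiagonal set of elements at least 2 -/
lemma Coh.one_N_even (H : Coh m r) {N : ℕ} (h5 : 5 ≤ N) (hN : N ≤ m) (he : Even (m-N))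
    (hr : r 1 N) (s : Finset ℕ) (hs : SymS s N)
    (hiso : ∀ a ∈ s, ∀ x ≤ N, r a x → x = a) :
    ∃ k : ℤ, ∑ a ∈ s, (N.choose a : ℤ) = 4 * k := by
  have ht := H.ad_trunc s N N hs hiso
  obtain ⟨k, hk⟩ := H.key_even (by omega) hN he hr _ (H.ad_inv s N)
  rw [ev_congr _ _ _ _ (fun a b ha hb => ht a b (by omega) (by omega)),
    ev_congr N 0 _ _ (fun a b ha hb => ht a b (by omega) (by omega)),
    ev_adT_eq _ _ _ hs] at hk
  obtain ⟨k', hk'⟩ := ev_adT_one s N (N-1) h5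
  exact ⟨k' - k, by omega⟩

/-- odd comparison between 1 and N for an antidiagonal set of elements at least 2 -/
lemma Coh.one_N_odd (H : Coh m r) {N : ℕ} (h5 : 5 ≤ N) (hN : N ≤ m) (he : Odd (m-N))
    (hr : r 1 N) (s : Finset ℕ) (hs : SymS s N)
    (hiso : ∀ a ∈ s, ∀ x ≤ N, r a x → x = a) :
    ∃ k : ℤ, ∑ a ∈ s, (N.choose a : ℤ) + 2 * ad r s N (N+1) (N+1) = 4 * k := by
  have ht := H.ad_trunc s N N hs hiso
  obtain ⟨k, hk⟩ := H.key_odd (by omega) hN he hr _ (H.ad_inv s N) (ad_symm s N hs)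
  rw [ht (1+1) (1+1) (by omega) (by omega),
    ev_congr _ _ _ _ (fun a b ha hb => ht a b (by omega) (by omega)),
    ev_congr N 0 _ _ (fun a b ha hb => ht a b (by omega) (by omega)),
    ev_adT_eq _ _ _ hs] at hk
  obtain ⟨k', hk'⟩ := ev_adT_one s N (N-1) h5
  have : adT s N (1+1) (1+1) = 0 := by simp only [adT]; rw [if_neg (by omega)]
  exact ⟨k' - k, by omega⟩

section merge
variable {N i0 : ℕ}

lemma Coh.merge_even (H : Coh m r) (hi : 1 ≤ i0) (hiN : i0 < N) (hN : N ≤ m) (hr : r i0 N)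
    (hmin : ∀ a b, a < N → b < N → r a b → a = b) (he : Even (m-N)) :
    r 1 2 ∨ (r 1 4 ∧ 4 ≤ m) := by
  have sy : ∀ {a b}, r a b → r b a := fun h => H.equiv.symm h
  have tra : ∀ {a b c}, r a b → r b c → r a c := fun h h' => H.equiv.trans h h'
  have hiso : ∀ a, a < N → a ≠ i0 → ∀ x ≤ N, r a x → x = a := by
    intro a ha hai x hx h
    rcases Nat.lt_or_ge x N with hx' | hx'
    · exact (hmin a x ha hx' h).symm
    · obtain rfl : x = N := by omega
      exact absurd (hmin a i0 ha hiN (tra h (sy hr))) hai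
  by_cases h1 : i0 = 1
  swap
  · exact (H.L1 (by omega) hiN hN he hr (fun a _ h2 => hiso a (by omega) (by omega))).elim
  subst h1
  by_cases h2 : N = 2
  · subst h2; exact Or.inl hr
  have hev : Even N := H.L2 (by omega) hN he hr (fun x hx h => by
    rcases Nat.lt_or_ge x N with hx' | hx'
    · exact Or.inl (hmin 1 x hiN hx' h).symm
    · exact Or.inr (by omega))
  by_cases h4 : N = 4
  · subst h4; exact Or.inr ⟨hr, hN⟩
  exfalso
  have h6 : 6 ≤ N := by obtain ⟨k, hk⟩ := hev; omega
  obtain ⟨k, hk⟩ := H.one_N_even (by omega) hN he hr (Finset.Icc 2 (N-2)) (symS_Icc N 2)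
    (fun a ha => hiso a (by simp at ha; omega) (by simp at ha; omega))
  obtain ⟨k', hk'⟩ := sum_choose2 N (by omega) hev
  omega

lemma Coh.merge_odd (H : Coh m r) (hi : 1 ≤ i0) (hiN : i0 < N) (hN : N ≤ m) (hr : r i0 N)
    (hmin : ∀ a b, a < N → b < N → r a b → a = b) (ho : Odd (m-N)) :
    r 1 2 ∨ (r 1 4 ∧ 4 ≤ m) := by
  have sy : ∀ {a b}, r a b → r b a := fun h => H.equiv.symm h
  have tra : ∀ {a b c}, r a b → r b c → r a c := fun h h' => H.equiv.trans h h'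
  have rf : ∀ a, r a a := H.equiv.refl
  have hiso : ∀ a, a < N → a ≠ i0 → ∀ x ≤ N, r a x → x = a := by
    intro a ha hai x hx h
    rcases Nat.lt_or_ge x N with hx' | hx'
    · exact (hmin a x ha hx' h).symm
    · obtain rfl : x = N := by omega
      exact absurd (hmin a i0 ha hiN (tra h (sy hr))) hai
  have hN1 : N + 1 ≤ m := by obtain ⟨k, hk⟩ := ho; omega
  have he1 : Even (m - (N+1)) := by obtain ⟨k, hk⟩ := ho; exact ⟨k, by omega⟩
  -- isolation up to N+1
  have hiso' : ∀ a, a < N → a ≠ i0 → ¬ r a (N+1) → ∀ x ≤ N+1, r a x → x = a := by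
    intro a ha hai hn x hx h
    rcases Nat.lt_or_ge x (N+1) with hx' | hx'
    · exact hiso a ha hai x (by omega) h
    · obtain rfl : x = N+1 := by omega
      exact absurd h hn
  by_cases h1 : i0 = 1
  swap
  · -- i0 ≥ 2
    have hs := symS_Icc i0 1
    have ht := H.ad_trunc (Finset.Icc 1 (i0-1)) i0 N hs (fun a ha => by
      simp only [Finset.mem_Icc] at ha; exact hiso a (by omega) (by omega))
    obtain ⟨k, hk⟩ := H.key_odd hiN.le hN ho hr _ (H.ad_inv (Finset.Icc 1 (i0-1)) i0) (ad_symm _ _ hs)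
    rw [ht (i0+1) (i0+1) (by omega) (by omega),
      ev_congr _ _ _ _ (fun a b ha hb => ht a b (by omega) (by omega)),
      ev_congr N 0 _ _ (fun a b ha hb => ht a b (by omega) (by omega)),
      ev_adT_gt _ _ _ _ hiN, ev_adT_eq _ _ _ hs] at hk
    obtain ⟨k', hk'⟩ := sum_choose1 i0 (by omega)
    have h0 : adT (Finset.Icc 1 (i0-1)) i0 (i0+1) (i0+1) = 0 := by
      simp only [adT]; rw [if_neg (by omega)]
    obtain ⟨c, hc, hc1, hc2⟩ := ad_ne_zero (r := r) (Finset.Icc 1 (i0-1)) i0 (N+1) (N+1) (by omega)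
    simp only [Finset.mem_Icc] at hc
    have hcc := hmin _ _ (by omega) (by omega) (tra hc1 (sy hc2))
    by_cases hc' : c = 1
    swap
    · refine (H.L1 (c := c) (N := N+1) (by omega) (by omega) hN1 he1 hc1 ?_).elim
      intro a ha hac
      refine hiso' a (by omega) (by omega) (fun h => ?_)
      have := hmin a c (by omega) (by omega) (tra h (sy hc1))
      omega
    subst hc'
    obtain rfl : i0 = 2 := by omega
    by_cases h3 : N = 3
    · subst h3; exact Or.inr ⟨hc1, hN1⟩
    exfalso
    have hev : Even (N+1) := by
      refine H.L2 (by omega) hN1 he1 hc1 (fun x hx h => ?_)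
      rcases Nat.lt_or_ge x (N+1) with hx' | hx'
      · exact Or.inl (hiso 1 (by omega) (by omega) x (by omega) h)
      · exact Or.inr (by omega)
    have n12 : ¬ r 1 2 := fun h => by have := hmin 1 2 (by omega) (by omega) h; omega
    have n13 : ¬ r 1 3 := fun h => by have := hmin 1 3 (by omega) (by omega) h; omega
    have n10 : ¬ r 1 0 := fun h => by have := hmin 1 0 (by omega) (by omega) h; omega
    let G := tn (ind r 1) (ind r 2)
    have hGi : Inv r (G + tr G) := fun a a' b b' g1 g2 => by
      simp only [G, Pi.add_apply, tn, tr]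
      rw [H.ind_inv 1 g1, H.ind_inv 1 g2, H.ind_inv 2 g1, H.ind_inv 2 g2]
    obtain ⟨l, hl⟩ := H.key_odd hiN.le hN ho hr _ hGi (fun a b => by
      simp only [Pi.add_apply, tr]; ring)
    rw [ev_add, ev_add, ev_tr, ev_tr] at hl
    have g3 : (G + tr G) (2+1) (2+1) = 0 := by
      simp only [G, Pi.add_apply, tn, tr]
      rw [show 2 + 1 = 3 from rfl, ind_neg n13]; ring
    have gN : (G + tr G) (N+1) (N+1) = 0 := by
      have : ¬ r 2 (N+1) := fun h => n12 (tra hc1 (sy h))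
      simp only [G, Pi.add_apply, tn, tr]
      rw [ind_neg this]; ring
    obtain ⟨p, hp⟩ := ev_mod2 2 (N-2) G
    have hp2 : ∃ q, ev 2 0 G = 2 * q := by
      rw [ev_eq_evc]
      simp only [evc, evb, G, tn, zero_add, Nat.reduceAdd]
      rw [ind_neg n10, ind_neg n12]
      exact ⟨ind r 1 1 * ind r 2 1 + ind r 1 1 * ind r 2 2, by ring⟩
    obtain ⟨q, hq⟩ := hp2
    have hGN : ev N 0 G = N := by
      rw [ev_congr N 0 G (fun a b => if a = 1 then ind r 2 b else 0), ev_row1]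
      · simp only [if_true]
        have : ¬ r 2 (N-1) := fun h => by have := hmin 2 (N-1) (by omega) (by omega) h; omega
        rw [ind_pos hr, ind_neg this]; simp
      · intro a b ha; rw [if_neg (by omega)]
      · intro a b ha hb
        simp only [G, tn]
        by_cases h : a = 1
        · rw [if_pos h, h, ind_pos (rf 1)]; ring
        · rw [if_neg h, ind_neg (fun h' => h (hiso 1 (by omega) (by omega) a (by omega) h'))]; ring
    obtain ⟨e, he⟩ := hev
    omega
  subst h1
  by_cases hN2 : N = 2
  · subst hN2; exact Or.inl hr
  by_cases hN4 : N = 4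
  · subst hN4; exact Or.inr ⟨hr, hN⟩
  by_cases hN3' : N = 3 ∧ r 1 (N+1)
  · obtain ⟨rfl, h⟩ := hN3'; exact Or.inr ⟨h, hN1⟩
  exfalso
  have n12 : ¬ r 1 2 := fun h => by have := hmin 1 2 (by omega) (by omega) h; omega
  have hisoN : ∀ x ≤ N, r 1 x → x = 1 ∨ x = N := fun x hx h => by
    rcases Nat.lt_or_ge x N with hx' | hx'
    · exact Or.inl (hmin 1 x hiN hx' h).symm
    · exact Or.inr (by omega)
  obtain ⟨k, hk⟩ := H.key_odd (by omega) hN ho hr _ H.sq_inv (fun a b => by simp only [tn]; ring)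
  obtain ⟨k', hk'⟩ := sq_at_1 H (N-1) n12
  rw [hk', sq_at_N (by omega) H hr hisoN] at hk
  simp only [tn] at hk
  rw [show 1 + 1 = 2 from rfl, ind_neg n12] at hk
  have hs2 := symS_pair N (by omega)
  by_cases hN1r : r 1 (N+1)
  · rw [ind_pos hN1r] at hk
    have hodd : N % 2 = 1 := by omega
    have h5 : 5 ≤ N := by
      by_contra h
      exact hN3' ⟨by omega, hN1r⟩
    rcases (show N % 4 = 3 ∨ N % 4 = 1 by omega) with h | h
    · obtain ⟨l, hl⟩ := H.one_N_odd h5 hN ho hr {2, N-2} hs2 (fun a ha => hiso a (by simp at ha; omega) (by simp at ha; omega))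
      rw [sum_pair N h5] at hl
      have h0 : ad r {2, N-2} N (N+1) (N+1) = 0 := by
        by_contra h0
        obtain ⟨a, ha, h1, h2⟩ := ad_ne_zero _ _ _ _ h0
        simp at ha
        have := hmin a 1 (by omega) (by omega) (tra h1 (sy hN1r))
        omega
      rw [h0] at hl
      obtain ⟨t, rfl⟩ : ∃ t, N = 4 * t + 3 := ⟨N / 4, by omega⟩
      push_cast at hl
      ring_nf at hl
      omega
    · have hs2' := symS_pair (N+1) (by omega)
      obtain ⟨l, hl⟩ := H.one_N_even (N := N+1) (by omega) hN1 he1 hN1r {2, N+1-2} hs2' (fun a ha => hiso' a (by simp at ha; omega) (by simp at ha; omega)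
          (fun h => by
            have := hmin a 1 (by simp at ha; omega) (by omega) (tra h (sy hN1r))
            simp at ha; omega))
      rw [sum_pair (N+1) (by omega)] at hl
      obtain ⟨t, rfl⟩ : ∃ t, N = 4 * t + 1 := ⟨N / 4, by omega⟩
      push_cast at hl
      ring_nf at hl
      omega
  · rw [ind_neg hN1r] at hk
    have hev : N % 2 = 0 := by omega
    have h6 : 6 ≤ N := by omega
    obtain ⟨l, hl⟩ := H.one_N_odd (by omega) hN ho hr (Finset.Icc 2 (N-2)) (symS_Icc N 2)
      (fun a ha => hiso a (by simp at ha; omega) (by simp at ha; omega))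
    obtain ⟨l', hl'⟩ := sum_choose2 N (by omega) (Nat.even_iff.2 hev)
    obtain ⟨c, hc, hc1, hc2⟩ := ad_ne_zero (r := r) (Finset.Icc 2 (N-2)) N (N+1) (N+1) (by omega)
    simp only [Finset.mem_Icc] at hc
    have hcc := hmin _ _ (by omega) (by omega) (tra hc1 (sy hc2))
    obtain ⟨p, hp⟩ := H.one_N_odd (by omega) hN ho hr {2, N-2} hs2 (fun a ha => hiso a (by simp at ha; omega) (by simp at ha; omega))
    rw [sum_pair N (by omega)] at hp
    have h0 : ad r {2, N-2} N (N+1) (N+1) = 0 := by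
      by_contra h0
      obtain ⟨a, ha, h1, h2⟩ := ad_ne_zero _ _ _ _ h0
      simp at ha
      have := hmin a (N-a) (by omega) (by omega) (tra h1 (sy h2))
      omega
    rw [h0] at hp
    have hN40 : N % 4 = 0 := by
      by_contra h
      obtain ⟨t, rfl⟩ : ∃ t, N = 4 * t + 2 := ⟨N / 4, by omega⟩
      push_cast at hp
      ring_nf at hp
      omega
    have hce : Even c := by rw [Nat.even_iff]; omega
    have hs := symS_Icc c 2
    have ht := H.ad_trunc (Finset.Icc 2 (c-2)) c (N+1) hs (fun a ha => by
      simp only [Finset.mem_Icc] at ha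
      refine hiso' a (by omega) (by omega) (fun h => ?_)
      have := hmin a c (by omega) (by omega) (tra h (sy hc1))
      omega)
    obtain ⟨q, hq⟩ := H.key_even (N := N+1) (by omega) hN1 he1 hc1 _ (H.ad_inv (Finset.Icc 2 (c-2)) c)
    rw [ev_congr _ _ _ _ (fun a b ha hb => ht a b (by omega) (by omega)),
      ev_congr (N+1) 0 _ _ (fun a b ha hb => ht a b (by omega) (by omega)),
      ev_adT_gt _ c (N+1) _ (by omega), ev_adT_eq _ _ _ hs] at hq
    obtain ⟨q', hq'⟩ := sum_choose2 c (by omega) hce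
    omega

end merge

/-- The fusion theorem. -/
theorem Coh.main (H : Coh m r) :
    (∀ i j, i ≤ m → j ≤ m → r i j → i = j) ∨ Cst r m ∨ (Per r m ∧ 4 ≤ m) := by
  by_cases hall : ∀ i j, i ≤ m → j ≤ m → r i j → i = j
  · exact Or.inl hall
  right
  have hex : ∃ N, N ≤ m ∧ ∃ i, i < N ∧ r i N := by
    push Not at hall
    obtain ⟨i, j, hi, hj, h, hij⟩ := hall
    rcases lt_or_gt_of_ne hij with h' | h'
    · exact ⟨j, hj, i, h', h⟩
    · exact ⟨i, hi, j, h', H.equiv.symm h⟩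
  classical
  obtain ⟨hN, i0, hiN, hr⟩ := Nat.find_spec hex
  set N := Nat.find hex with hNdef
  have hmin : ∀ a b, a < N → b < N → r a b → a = b := by
    have aux : ∀ a b, b < N → a < b → ¬ r a b := by
      intro a b hb hab h
      exact Nat.find_min hex hb ⟨by omega, a, hab, h⟩
    intro a b ha hb h
    rcases lt_trichotomy a b with h' | h' | h'
    · exact absurd h (aux a b hb h')
    · exact h'
    · exact absurd (H.equiv.symm h) (aux b a ha h')
  have hi : 1 ≤ i0 := by
    rcases Nat.eq_zero_or_pos i0 with h | h
    · subst h; have := H.zero _ hr; omega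
    · exact h
  have key : r 1 2 ∨ (r 1 4 ∧ 4 ≤ m) := by
    rcases Nat.even_or_odd (m - N) with he | ho
    · exact H.merge_even hi hiN hN hr hmin he
    · exact H.merge_odd hi hiN hN hr hmin ho
  have fin : r 1 4 ∧ 4 ≤ m → Cst r m ∨ (Per r m ∧ 4 ≤ m) := fun ⟨h, h4⟩ => by
    rcases H.after14 h4 h with h | h
    · exact Or.inl h
    · exact Or.inr ⟨h, h4⟩
  rcases key with h | h
  · rcases H.after12 (by omega) h with h | h
    · exact Or.inl h
    · exact fin h
  · exact fin h

end HamFus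


namespace HamFus

/-- ternary space -/
abbrev V (m : ℕ) := Fin m → ZMod 3

variable {m : ℕ}

/-- adjacency -/
def R (c : ZMod 3) (x y : V m) : Prop := x ≠ y ∧ (x - y) ⬝ᵥ (x - y) = c

lemma three0 : (3 : ZMod 3) = 0 := rfl

lemma zmod3_sq {c : ZMod 3} (h : c ≠ 0) : c * c = 1 := by revert c; decide

lemma exists_dot_ne {u : V m} (hu : u ≠ 0) : ∃ t : V m, t ⬝ᵥ u ≠ 0 := by
  obtain ⟨i, hi⟩ := Function.ne_iff.1 hu
  exact ⟨Pi.single i 1, by simpa using hi⟩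

lemma R_of (c : ZMod 3) (hc : c ≠ 0) {x y : V m} : R c x y ↔ (x - y) ⬝ᵥ (x - y) = c := by
  constructor
  · exact fun h => h.2
  · intro h
    refine ⟨?_, h⟩
    rintro rfl
    simp at h
    exact hc h.symm

/-- characterization of the third point on a line, nonzero type -/
lemma iso_char {c : ZMod 3} (hc : c ≠ 0) {x y : V m} (hxy : R c x y) (z : V m) :
    (R c x z ∧ R c y z ∧ ∀ w, R c x w → R c y w → ¬ R c z w) ↔ z = -x-y := by
  simp only [R_of c hc] at hxy ⊢
  obtain ⟨h, rfl⟩ : ∃ h, y = x + h := ⟨y - x, by abel⟩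
  have hh : h ⬝ᵥ h = c := by simpa using hxy
  have h3 : (3 : ZMod 3) = 0 := rfl
  have e3 : ∀ v : V m, v + v = -v := by
    intro v; ext i; simp; generalize v i = a; revert a; decide
  have hz : -x - (x+h) = x - h := by
    have := e3 x
    rw [show -x - (x+h) = -(x+x) - h by abel, this]; abel
  rw [hz]
  constructor
  · rintro ⟨h1, h2, h3'⟩
    by_contra hne
    obtain ⟨u, rfl⟩ : ∃ u, z = x - h + u := ⟨z - (x - h), by abel⟩
    have hu : u ≠ 0 := fun h0 => hne (by rw [h0, add_zero])
    rw [show x - (x - h + u) = h - u by abel] at h1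
    rw [show x + h - (x - h + u) = (h + h) - u by abel, e3] at h2
    simp only [sub_dotProduct, dotProduct_sub, neg_dotProduct, dotProduct_neg, hh,
      dotProduct_comm u h] at h1 h2
    have huh : h ⬝ᵥ u = 0 := by linear_combination h2 - h1 - (h ⬝ᵥ u) * h3
    have huu : u ⬝ᵥ u = 0 := by linear_combination h1 + 2 * huh
    obtain ⟨t0, ht0⟩ := exists_dot_ne hu
    have hcc := zmod3_sq hc
    obtain ⟨t, ht1, ht2⟩ : ∃ t : V m, t ⬝ᵥ h = 0 ∧ t ⬝ᵥ u = c := by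
      refine ⟨(c * (t0 ⬝ᵥ u)) • (t0 - ((t0 ⬝ᵥ h) * c) • h), ?_, ?_⟩
      · simp only [smul_dotProduct, sub_dotProduct, hh, smul_eq_mul]
        linear_combination -(c * (t0 ⬝ᵥ u)) * (t0 ⬝ᵥ h) * hcc
      · simp only [smul_dotProduct, sub_dotProduct, huh, smul_eq_mul]
        linear_combination c * zmod3_sq ht0
    have hut : u ⬝ᵥ t = c := by rw [dotProduct_comm]; exact ht2
    have hht : h ⬝ᵥ t = 0 := by rw [dotProduct_comm]; exact ht1
    have huh' : u ⬝ᵥ h = 0 := by rw [dotProduct_comm]; exact huh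
    refine h3' (x - h + (t + ((t ⬝ᵥ t) * c) • u)) ?_ ?_ ?_
    · rw [show x - (x - h + (t + ((t ⬝ᵥ t) * c) • u)) = h - t - ((t ⬝ᵥ t) * c) • u by abel]
      simp only [sub_dotProduct, dotProduct_sub, smul_dotProduct, dotProduct_smul, smul_eq_mul,
        hh, ht1, ht2, hut, hht, huh, huu, huh']
      linear_combination 2 * (t ⬝ᵥ t) * hcc + (t ⬝ᵥ t) * h3
    · rw [show x + h - (x - h + (t + ((t ⬝ᵥ t) * c) • u)) = (h + h) - t - ((t ⬝ᵥ t) * c) • u by abel,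
        e3]
      simp only [sub_dotProduct, dotProduct_sub, smul_dotProduct, dotProduct_smul, smul_eq_mul,
        neg_dotProduct, dotProduct_neg,
        hh, ht1, ht2, hut, hht, huh, huu, huh']
      linear_combination 2 * (t ⬝ᵥ t) * hcc + (t ⬝ᵥ t) * h3
    · rw [show x - h + u - (x - h + (t + ((t ⬝ᵥ t) * c) • u)) = u - t - ((t ⬝ᵥ t) * c) • u by abel]
      simp only [sub_dotProduct, dotProduct_sub, smul_dotProduct, dotProduct_smul, smul_eq_mul,
        hh, ht1, ht2, hut, hht, huh, huu, huh']
      linear_combination 2 * (t ⬝ᵥ t) * hcc + (t ⬝ᵥ t) * h3 - c * h3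
  · rintro rfl
    refine ⟨by rw [show x - (x - h) = h by abel]; exact hh, ?_, ?_⟩
    · rw [show x + h - (x - h) = h + h by abel, e3]; simp [hh]
    · intro w h1 h2
      obtain ⟨s, rfl⟩ : ∃ s, w = x + s := ⟨w - x, by abel⟩
      rw [show x - (x + s) = -s by abel] at h1
      rw [show x + h - (x + s) = h - s by abel] at h2
      rw [show x - h - (x + s) = -h - s by abel]
      simp only [sub_dotProduct, dotProduct_sub, neg_dotProduct, dotProduct_neg, hh,
        dotProduct_comm s h] at h1 h2 ⊢
      intro h4
      apply hc
      linear_combination 2 * h1 - h2 - h4 + c * h3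

/-- characterization of the third point on a line, zero type -/
lemma dom_char {x y : V m} (hxy : R 0 x y) (z : V m) :
    (R 0 x z ∧ R 0 y z ∧ ∀ w, R 0 x w → R 0 y w → w ≠ z → R 0 z w) ↔ z = -x-y := by
  obtain ⟨h, rfl⟩ : ∃ h, y = x + h := ⟨y - x, by abel⟩
  have h0 : h ≠ 0 := fun h0 => hxy.1 (by rw [h0, add_zero])
  have hh : h ⬝ᵥ h = 0 := by simpa using hxy.2
  have h3 : (3 : ZMod 3) = 0 := rfl
  have e3 : ∀ v : V m, v + v = -v := by
    intro v; ext i; simp; generalize v i = a; revert a; decide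
  have hz : -x - (x+h) = x - h := by
    have := e3 x
    rw [show -x - (x+h) = -(x+x) - h by abel, this]; abel
  rw [hz]
  constructor
  · rintro ⟨⟨g1, h1⟩, ⟨g2, h2⟩, h3'⟩
    by_contra hne
    obtain ⟨s, rfl⟩ : ∃ s, z = x + s := ⟨z - x, by abel⟩
    rw [show x - (x + s) = -s by abel] at h1
    rw [show x + h - (x + s) = h - s by abel] at h2
    have s0 : s ≠ 0 := fun h => g1 (by rw [h, add_zero])
    have sh : s ≠ h := fun h => g2 (by rw [h])
    have snh : s ≠ -h := fun h => hne (by rw [h]; abel)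
    simp only [sub_dotProduct, dotProduct_sub, neg_dotProduct, dotProduct_neg, hh,
      dotProduct_comm s h, neg_neg] at h1 h2
    have hs : h ⬝ᵥ s = 0 := by linear_combination h2 - h1 + (h ⬝ᵥ s) * h3
    obtain ⟨i, hi⟩ := Function.ne_iff.1 h0
    simp at hi
    have hii := zmod3_sq hi
    have s1 : s - (s i * h i) • h ≠ 0 := by
      intro h5
      have h5 : s = (s i * h i) • h := sub_eq_zero.1 h5
      have tri : ∀ a : ZMod 3, a = 0 ∨ a = 1 ∨ a = -1 := by decide
      generalize s i * h i = a at h5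
      rcases tri a with rfl | rfl | rfl
      · exact s0 (by simpa using h5)
      · exact sh (by simpa using h5)
      · exact snh (by simpa using h5)
    obtain ⟨j, hj⟩ := Function.ne_iff.1 s1
    simp at hj
    obtain ⟨t, ht1, ht2⟩ : ∃ t : V m, t ⬝ᵥ h = 0 ∧ t ⬝ᵥ s ≠ 0 := by
      refine ⟨Pi.single j 1 - (h j * h i) • Pi.single i 1, ?_, ?_⟩
      · simp [sub_dotProduct, smul_dotProduct]
        linear_combination -(h j) * hii
      · simp [sub_dotProduct, smul_dotProduct]
        intro h6; apply hj; linear_combination h6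
    have htt := zmod3_sq ht2
    have hht : h ⬝ᵥ t = 0 := by rw [dotProduct_comm]; exact ht1
    have hst : s ⬝ᵥ t = t ⬝ᵥ s := dotProduct_comm _ _
    have hsh : s ⬝ᵥ h = 0 := by rw [dotProduct_comm]; exact hs
    set β := t ⬝ᵥ s with hβ
    set s' : V m := t + ((t ⬝ᵥ t) * β) • s with hs'
    have k1 : s' ⬝ᵥ s = β := by
      simp only [hs', add_dotProduct, smul_dotProduct, smul_eq_mul, h1, ← hβ]; ring
    have k2 : s' ⬝ᵥ h = 0 := by
      simp only [hs', add_dotProduct, smul_dotProduct, smul_eq_mul, hsh, ht1]; ring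
    have k3 : s' ⬝ᵥ s' = 0 := by
      simp only [hs', add_dotProduct, smul_dotProduct, dotProduct_add, dotProduct_smul,
        smul_eq_mul, h1, ← hβ, hst]
      linear_combination 2 * (t ⬝ᵥ t) * htt + (t ⬝ᵥ t) * h3
    have k2' : h ⬝ᵥ s' = 0 := by rw [dotProduct_comm]; exact k2
    have k1' : s ⬝ᵥ s' = β := by rw [dotProduct_comm]; exact k1
    have := h3' (x + s') ⟨?_, ?_⟩ ⟨?_, ?_⟩ ?_
    · have := this.2
      rw [show x + s - (x + s') = s - s' by abel] at this
      simp only [sub_dotProduct, dotProduct_sub, h1, k1, k1', k3] at this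
      apply ht2
      linear_combination this + β * h3
    · intro h6
      have : s' = 0 := by simpa using h6
      rw [this] at k1; simp at k1; exact ht2 k1.symm
    · rw [show x - (x + s') = -s' by abel]; simp [k3]
    · intro h6
      have : h = s' := by simpa using h6
      rw [← this, hs] at k1; exact ht2 k1.symm
    · rw [show x + h - (x + s') = h - s' by abel]
      simp only [sub_dotProduct, dotProduct_sub, hh, k2, k2', k3]; ring
    · intro h6
      have : s' = s := by simpa using h6
      rw [this, h1] at k1; exact ht2 k1.symm
  · rintro rfl
    refine ⟨⟨?_, ?_⟩, ⟨?_, ?_⟩, ?_⟩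
    · intro h5
      apply h0
      have h6 : h = x - (x - h) := by abel
      rw [h6, ← h5, sub_self]
    · rw [show x - (x - h) = h by abel]; exact hh
    · intro h5; apply h0
      have : h + h = 0 := by rw [show h + h = x + h - (x - h) by abel, h5, sub_self]
      rw [e3] at this; simpa using this
    · rw [show x + h - (x - h) = h + h by abel, e3]; simp [hh]
    · rintro w ⟨_, h1⟩ ⟨_, h2⟩ hw
      refine ⟨hw.symm, ?_⟩
      obtain ⟨s, rfl⟩ : ∃ s, w = x + s := ⟨w - x, by abel⟩
      rw [show x - (x + s) = -s by abel] at h1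
      rw [show x + h - (x + s) = h - s by abel] at h2
      rw [show x - h - (x + s) = -h - s by abel]
      simp only [sub_dotProduct, dotProduct_sub, neg_dotProduct, dotProduct_neg, hh,
        dotProduct_comm s h] at h1 h2 ⊢
      linear_combination 2 * h1 - h2

/-- direction of lines preserved by `F` -/
def Line (F : V m → V m) (h : V m) : Prop := ∀ x, F x + F (x + h) + F (x - h) = 0

lemma line_of_R (c : ZMod 3) (π : Equiv.Perm (V m)) (hπ : ∀ x y, R c (π x) (π y) ↔ R c x y)
    (h : V m) (h0 : h ≠ 0) (hh : h ⬝ᵥ h = c) : Line π h := by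
  intro x
  have hxy : R c x (x+h) := ⟨by simpa using h0, by simpa using hh⟩
  have e3 : ∀ v : V m, v + v = -v := by
    intro v; ext i; simp; generalize v i = a; revert a; decide
  have hz : -x - (x+h) = x - h := by
    have := e3 x
    rw [show -x - (x+h) = -(x+x) - h by abel, this]; abel
  have hxy' := (hπ _ _).2 hxy
  have key : π (x - h) = - π x - π (x+h) := by
    by_cases hc : c = 0
    · subst hc
      rw [← dom_char hxy', hπ, hπ]
      obtain ⟨a1, a2, a3⟩ := (dom_char hxy (x-h)).2 hz.symm
      refine ⟨a1, a2, fun w w1 w2 w3 => ?_⟩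
      obtain ⟨w, rfl⟩ := π.surjective w
      rw [hπ] at w1 w2 ⊢
      exact a3 w w1 w2 (fun h => w3 (by rw [h]))
    · rw [← iso_char hc hxy', hπ, hπ]
      obtain ⟨a1, a2, a3⟩ := (iso_char hc hxy (x-h)).2 hz.symm
      refine ⟨a1, a2, fun w w1 w2 => ?_⟩
      obtain ⟨w, rfl⟩ := π.surjective w
      rw [hπ] at w1 w2 ⊢
      exact a3 w w1 w2
  rw [key]; abel

end HamFus

namespace HamFus
variable {m : ℕ}

/-- shift operators as a monoid hom -/
noncomputable def shiftHom (m : ℕ) : Multiplicative (V m) →* Module.End (ZMod 3) (V m → V m) where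
  toFun h := LinearMap.funLeft (ZMod 3) (V m) (fun x => x + h.toAdd)
  map_one' := by ext f x; simp [LinearMap.funLeft]
  map_mul' a b := by
    apply LinearMap.ext; intro f; funext x
    simp [LinearMap.funLeft]
    congr 1
    abel

lemma shiftHom_apply (h : V m) (F : V m → V m) (x : V m) :
    shiftHom m (Multiplicative.ofAdd h) F x = F (x + h) := rfl

theorem ringPkg (F : V m → V m) : ∃ (S : Type) (_ : CommRing S) (τ : V m → S)
    (ι : S →+ (V m → V m)), (∀ x y, τ (x + y) = τ x * τ y) ∧ τ 0 = 1 ∧ (3 : S) = 0 ∧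
    Function.Injective ι ∧ (∀ h s x, ι (τ h * s) x = ι s (x + h)) ∧ ι 1 = F := by
  classical
  let A := AddMonoidAlgebra (ZMod 3) (V m)
  let L : A →ₐ[ZMod 3] Module.End (ZMod 3) (V m → V m) :=
    AddMonoidAlgebra.lift (ZMod 3) _ (V m) (shiftHom m)
  have Ls : ∀ h, L (AddMonoidAlgebra.single h 1) = shiftHom m (Multiplicative.ofAdd h) := by
    intro h; exact (AddMonoidAlgebra.lift_single _ _ _).trans (one_smul _ _)
  let I : Ideal A :=
    { carrier := {a | L a F = 0}
      add_mem' := by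
        intro a b ha hb
        simp only [Set.mem_ofPred_eq] at *
        rw [map_add, LinearMap.add_apply, ha, hb, add_zero]
      zero_mem' := by simp
      smul_mem' := by
        intro a b hb
        simp only [Set.mem_ofPred_eq] at *
        rw [smul_eq_mul, map_mul, Module.End.mul_apply, hb, map_zero] }
  let φ : A →+ (V m → V m) :=
    { toFun := fun a => L a F
      map_zero' := by simp
      map_add' := by intro a b; simp }
  let ι : (A ⧸ I) →+ (V m → V m) := QuotientAddGroup.lift I.toAddSubgroup φ (fun a ha => ha)
  have hι : ∀ a : A, ι (Ideal.Quotient.mk I a) = L a F := fun a => rfl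
  refine ⟨A ⧸ I, inferInstance, fun h => Ideal.Quotient.mk I (AddMonoidAlgebra.single h 1), ι,
    ?_, ?_, ?_, ?_, ?_, ?_⟩
  · intro x y
    rw [← map_mul, AddMonoidAlgebra.single_mul_single, one_mul]
  · rfl
  · have h3 : (3 : A) = 0 := by
      have h := map_ofNat (algebraMap (ZMod 3) A) 3
      rw [← h]
      exact (congrArg _ three0).trans (map_zero _)
    have h := map_ofNat (Ideal.Quotient.mk I) 3
    rw [← h]
    exact (congrArg _ h3).trans (map_zero _)
  · rw [injective_iff_map_eq_zero]
    intro a ha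
    obtain ⟨a, rfl⟩ := Ideal.Quotient.mk_surjective a
    rw [hι] at ha
    exact Ideal.Quotient.eq_zero_iff_mem.2 ha
  · intro h s x
    obtain ⟨a, rfl⟩ := Ideal.Quotient.mk_surjective s
    rw [← map_mul, hι, hι, map_mul, Module.End.mul_apply, Ls, shiftHom_apply]
  · have := hι 1
    rw [map_one L] at this
    exact this

/-- second differences vanish -/
def Flat (F : V m → V m) (e f : V m) : Prop := ∀ x, F (x + e + f) - F (x + e) - F (x + f) + F x = 0

lemma line_sq {S : Type} [CommRing S] {τ : V m → S} {ι : S →+ (V m → V m)} {F : V m → V m}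
    (h1 : ∀ x y, τ (x + y) = τ x * τ y)  (h3 : (3 : S) = 0)
    (hi : Function.Injective ι) (hs : ∀ h s x, ι (τ h * s) x = ι s (x + h)) (hF : ι 1 = F)
    {h : V m} (hl : Line F h) : (τ h - 1) ^ 2 = 0 := by
  have e3 : h + h = -h := by
    ext i; simp; generalize h i = a; revert a; decide
  have : τ h * τ h = τ (-h) := by rw [← h1, e3]
  have key : 1 + τ h + τ (-h) = 0 := by
    apply hi
    rw [map_zero, map_add, map_add]
    funext x
    have a1 := hs h 1 x
    have a2 := hs (-h) 1 x
    rw [mul_one] at a1 a2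
    simp only [Pi.add_apply, a1, a2, hF, Pi.zero_apply, ← sub_eq_add_neg]
    exact hl x
  linear_combination this + key - τ h * h3

lemma flat_of {S : Type} [CommRing S] {τ : V m → S} {ι : S →+ (V m → V m)} {F : V m → V m}
    (h1 : ∀ x y, τ (x + y) = τ x * τ y)
    (hs : ∀ h s x, ι (τ h * s) x = ι s (x + h)) (hF : ι 1 = F)
    {e f : V m} (hl : (τ e - 1) * (τ f - 1) = 0) : Flat F e f := by
  intro x
  have k : τ (e + f) * 1 - τ e * 1 - τ f * 1 + 1 = 0 := by rw [h1]; linear_combination hl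
  have := congrArg (fun s => ι s x) k
  simp only [map_add, map_sub, map_zero, Pi.add_apply, Pi.sub_apply, hs, hF, Pi.zero_apply] at this
  rw [← this, add_assoc]

/-- polarization -/
lemma prod_zero {S : Type} [CommRing S] (h3 : (3 : S) = 0) {a b : S} (ha : (a - 1) ^ 2 = 0)
    (hb : (b - 1) ^ 2 = 0) (hab : (a * b - 1) ^ 2 = 0) : (a - 1) * (b - 1) = 0 := by
  linear_combination (a - 1) * (b - 1) * h3 - hab + ((b - 1) ^ 2 + 2 * (b - 1) + 1) * ha +
    (1 + 2 * (a - 1)) * hb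

end HamFus

set_option linter.unusedSimpArgs false
namespace HamFus
variable {m : ℕ}

/-- unit vectors -/
abbrev ee (i : Fin m) : V m := Pi.single i 1

lemma ee_dot (i j : Fin m) : ee i ⬝ᵥ ee j = if i = j then 1 else 0 := by
  simp [ee, Pi.single_apply, eq_comm]

lemma add_self3 (v : V m) : v + v = -v := by
  ext i; simp; generalize v i = a; revert a; decide

lemma two_more (hm : 4 ≤ m) (i j : Fin m) : ∃ k l : Fin m, i ≠ k ∧ j ≠ k ∧ i ≠ l ∧ j ≠ l ∧ k ≠ l := by
  have h1 : 1 < (Finset.univ \ {i, j} : Finset (Fin m)).card := by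
    have := Finset.le_card_sdiff ({i, j} : Finset (Fin m)) Finset.univ
    have h2 := Finset.card_le_two (a := i) (b := j)
    simp only [Finset.card_univ, Fintype.card_fin] at this
    omega
  obtain ⟨k, hk, l, hl, hkl⟩ := Finset.one_lt_card.1 h1
  simp only [Finset.mem_sdiff, Finset.mem_univ, Finset.mem_insert, Finset.mem_singleton, true_and,
    not_or] at hk hl
  exact ⟨k, l, Ne.symm hk.1, Ne.symm hk.2, Ne.symm hl.1, Ne.symm hl.2, hkl⟩

lemma one_more (hm : 3 ≤ m) (i j : Fin m) : ∃ k : Fin m, i ≠ k ∧ j ≠ k := by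
  have h1 : 0 < (Finset.univ \ {i, j} : Finset (Fin m)).card := by
    have := Finset.le_card_sdiff ({i, j} : Finset (Fin m)) Finset.univ
    have h2 := Finset.card_le_two (a := i) (b := j)
    simp only [Finset.card_univ, Fintype.card_fin] at this
    omega
  obtain ⟨k, hk⟩ := Finset.card_pos.1 h1
  simp only [Finset.mem_sdiff, Finset.mem_univ, Finset.mem_insert, Finset.mem_singleton, true_and,
    not_or] at hk
  exact ⟨k, Ne.symm hk.1, Ne.symm hk.2⟩

lemma inv_const {X : Type*} (F : V m → X) (h : ∀ j x, F (x + ee j) = F x) (x : V m) : F x = F 0 := by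
  have h1 : ∀ j (n : ℕ) x, F (x + n • ee j) = F x := by
    intro j n
    induction n with
    | zero => intro x; simp
    | succ n ih => intro x; rw [succ_nsmul, ← add_assoc, h, ih]
  have h2 : ∀ j (c : ZMod 3) x, F (x + Pi.single j c) = F x := by
    intro j c x
    rw [← h1 j c.val x]
    congr 2
    rw [← Pi.single_smul]; simp
  have h3 : ∀ s : Finset (Fin m), F (∑ i ∈ s, Pi.single i (x i)) = F 0 := by
    intro s
    induction s using Finset.induction_on with
    | empty => simp
    | insert a s ha ih => rw [Finset.sum_insert ha, add_comm, h2, ih]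
  rw [← h3 Finset.univ, Finset.univ_sum_single]

lemma affine_of (F : V m → V m) (h : ∀ i j, Flat F (ee i) (ee j)) :
    ∃ (A : Matrix (Fin m) (Fin m) (ZMod 3)) (b : V m), ∀ x, F x = A.mulVec x + b := by
  have h1 : ∀ i x, F (x + ee i) - F x = F (0 + ee i) - F 0 := by
    intro i
    apply inv_const (fun x => F (x + ee i) - F x)
    intro j x
    have := h i j x
    rw [add_right_comm x (ee j) (ee i)]
    rw [← sub_eq_zero, ← this]; abel
  refine ⟨Matrix.of fun k i => (F (0 + ee i) - F 0) k, F 0, fun x => ?_⟩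
  have h2 := inv_const (fun x => F x - (Matrix.of fun k i => (F (0 + ee i) - F 0) k).mulVec x) (by
    intro j x
    have := h1 j x
    simp only [mulVec_add, ee, mulVec_single_one]
    have h3 : (Matrix.of fun k i => (F (0 + ee i) - F 0) k).col j = F (0 + ee j) - F 0 := by
      ext k; simp
    rw [h3, ← this]; abel) x
  simp only [mulVec_zero, sub_zero] at h2
  rw [sub_eq_iff_eq_add] at h2
  rw [h2, add_comm]

lemma unit_of (π : Equiv.Perm (V m)) (A : Matrix (Fin m) (Fin m) (ZMod 3)) (b : V m)
    (h : ∀ x, π x = A.mulVec x + b) : IsUnit A := by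
  rw [← Matrix.mulVec_injective_iff_isUnit]
  intro x y hxy
  apply π.injective
  rw [h, h, hxy]


lemma c1_alg {S : Type} [CommRing S] {τ : V m → S} (h1 : ∀ x y, τ (x + y) = τ x * τ y)
    (h3 : (3 : S) = 0) (hm : 4 ≤ m) (hN : ∀ h : V m, h ≠ 0 → h ⬝ᵥ h = 1 → (τ h - 1) ^ 2 = 0)
    (i j : Fin m) : (τ (ee i) - 1) * (τ (ee j) - 1) = 0 := by
  have hN : ∀ h : V m, h ⬝ᵥ h = 1 → (τ h - 1) ^ 2 = 0 := by
    intro h hh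
    refine hN h ?_ hh
    rintro rfl
    simp at hh
  have hs : ∀ i, (τ (ee i) - 1) ^ 2 = 0 := fun i => hN _ (by simp)
  by_cases hij : i = j
  · subst hij; rw [← hs i]; ring
  obtain ⟨k, l, ik, jk, il, jl, kl⟩ := two_more hm i j
  have ji := Ne.symm hij
  have ki := ik.symm
  have kj := jk.symm
  have li := il.symm
  have lj := jl.symm
  have lk := kl.symm
  have key : ∀ c d : ZMod 3, c ≠ 0 → d ≠ 0 →
      (τ (ee i) - 1) * (τ (ee i + ee j + Pi.single k c + Pi.single l d) - 1) = 0 := by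
    intro c d hc hd
    have hc := zmod3_sq hc
    have hd := zmod3_sq hd
    apply prod_zero h3 (hs i)
    · apply hN
      simp [ee, add_dotProduct, hij, ik, jk, il, jl, kl, ji, ki, kj, li, lj, lk, hc, hd]
      decide
    · rw [← h1]
      apply hN
      simp [ee, add_dotProduct, hij, ik, jk, il, jl, kl, ji, ki, kj, li, lj, lk, hc, hd]
      decide
  have e2 : ∀ k : Fin m, (Pi.single k (-1) : V m) = ee k + ee k := by
    intro k; rw [add_self3, ← Pi.single_neg]
  have k1 := key 1 1 (by decide) (by decide)
  have k2 := key 1 (-1) (by decide) (by decide)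
  have k3 := key (-1) 1 (by decide) (by decide)
  have k4 := key (-1) (-1) (by decide) (by decide)
  simp only [e2, h1] at k1 k2 k3 k4
  have i2 := hs i
  have j2 := hs j
  have kk2 := hs k
  have l2 := hs l
  generalize τ (ee i) = a at *
  generalize τ (ee j) = b at *
  have ek : τ (ee k) + τ (ee k) * τ (ee k) = 2 := by linear_combination kk2 + (τ (ee k) - 1) * h3
  have el : τ (ee l) + τ (ee l) * τ (ee l) = 2 := by linear_combination l2 + (τ (ee l) - 1) * h3
  generalize τ (ee k) = c at *
  generalize τ (ee l) = d at *
  have hsum : (a - 1) * (a * b * ((c + c * c) * (d + d * d)) - 4) = 0 := by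
    linear_combination k1 + k2 + k3 + k4
  rw [ek, el] at hsum
  linear_combination hsum - (a - 1) * (a * b - 1) * h3 - b * i2
   
lemma triple {S : Type} [CommRing S] (h3 : (3 : S) = 0) {a b c : S} (sa : (a - 1) ^ 2 = 0)
    (sb : (b - 1) ^ 2 = 0) (ab : (a - 1) * (b - 1) = 0) (ac : (a - 1) * (c - 1) = 0)
    (bc : (b - 1) * (c - 1) = 0) : c * (a * a) * (b * b) - 1 = (c - 1) - (a - 1) - (b - 1) := by
  have aa : a * a = 1 - (a - 1) := by linear_combination sa + (a - 1) * h3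
  have bb : b * b = 1 - (b - 1) := by linear_combination sb + (b - 1) * h3
  rw [aa, bb]
  linear_combination c * ab - ac - bc

lemma c2_alg {S : Type} [CommRing S] {τ : V m → S} (h1 : ∀ x y, τ (x + y) = τ x * τ y)
    (h3 : (3 : S) = 0) (hm : 3 ≤ m) (hN : ∀ h : V m, h ≠ 0 → h ⬝ᵥ h = 2 → (τ h - 1) ^ 2 = 0)
    (i j : Fin m) : (τ (ee i) - 1) * (τ (ee j) - 1) = 0 := by
  have hN : ∀ h : V m, h ⬝ᵥ h = 2 → (τ h - 1) ^ 2 = 0 := by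
    intro h hh
    refine hN h ?_ hh
    rintro rfl
    simp at hh
    exact absurd hh (by decide)
  have pz : ∀ f g : V m, f ⬝ᵥ f = 2 → g ⬝ᵥ g = 2 → f ⬝ᵥ g = 1 → (τ f - 1) * (τ g - 1) = 0 := by
    intro f g hf hg hfg
    have g2 := hN g hg
    have hgf : g ⬝ᵥ f = 1 := by rw [dotProduct_comm]; exact hfg
    have := prod_zero h3 (hN f hf) (b := τ (-g)) (hN _ (by simpa using hg)) (by
      rw [← h1]
      apply hN
      simp [hf, hg, hfg, hgf]
      decide)
    rw [← add_self3, h1] at this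
    linear_combination (τ f - 1) * g2 - this + (τ f - 1) * (τ g - 1) * h3
  have main : ∀ i j k : Fin m, i ≠ j → i ≠ k → j ≠ k →
      (τ (ee i) - 1) * (τ (ee j) - 1) = 0 ∧ (τ (ee i) - 1) * (τ (ee i) - 1) = 0 := by
    intro i j k hij ik jk
    have ji := hij.symm
    have ki := ik.symm
    have kj := jk.symm
    have n1 : (ee i + ee j) ⬝ᵥ (ee i + ee j) = 2 := by
      simp [ee, add_dotProduct, hij, ik, jk, ji, ki, kj]; decide
    have n2 : (ee i + ee k) ⬝ᵥ (ee i + ee k) = 2 := by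
      simp [ee, add_dotProduct, hij, ik, jk, ji, ki, kj]; decide
    have n3 : (ee j + ee k) ⬝ᵥ (ee j + ee k) = 2 := by
      simp [ee, add_dotProduct, hij, ik, jk, ji, ki, kj]; decide
    have p12 := pz _ _ n1 n2 (by simp [ee, add_dotProduct, hij, ik, jk, ji, ki, kj])
    have p13 := pz _ _ n1 n3 (by simp [ee, add_dotProduct, hij, ik, jk, ji, ki, kj])
    have p23 := pz _ _ n2 n3 (by simp [ee, add_dotProduct, hij, ik, jk, ji, ki, kj])
    have s1 := hN _ n1
    have s2 := hN _ n2
    have s3 := hN _ n3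
    have ei : ee i = (ee j + ee k) + ((ee i + ee j) + (ee i + ee j)) + ((ee i + ee k) + (ee i + ee k)) := by
      have := add_self3 (ee i)
      have h2 := add_self3 (ee j)
      have h4 := add_self3 (ee k)
      grind
    have ej : ee j = (ee i + ee k) + ((ee i + ee j) + (ee i + ee j)) + ((ee j + ee k) + (ee j + ee k)) := by
      have := add_self3 (ee i)
      have h2 := add_self3 (ee j)
      have h4 := add_self3 (ee k)
      grind
    have ti := triple h3 s1 s2 p12 p13 p23
    have tj := triple h3 s1 s3 p13 p12 (by rw [mul_comm]; exact p23)
    simp only [← h1] at ti tj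
    rw [← ei] at ti
    rw [← ej] at tj
    rw [ti, tj]
    generalize τ (ee i + ee j) - 1 = a at *
    generalize τ (ee i + ee k) - 1 = b at *
    generalize τ (ee j + ee k) - 1 = c at *
    constructor
    · linear_combination -p12 + p12 - 2 * p13 + 2 * p13 + p23 - s3 + s1 - s2 + p23
    · linear_combination s1 + s2 + s3 + 2 * p12 - 2 * p13 - 2 * p23
  by_cases hij : i = j
  · subst hij
    obtain ⟨j, hj, _⟩ := one_more hm i i
    obtain ⟨k, hk, hk'⟩ := one_more hm i j
    exact (main i j k hj hk hk').2
  · obtain ⟨k, hk, hk'⟩ := one_more hm i j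
    exact (main i j k hij hk hk').1

lemma c0_pure {S : Type} [CommRing S] (h3 : (3 : S) = 0) {A B C D : S}
    (t : (A + B + C + A * C - D - B * D) ^ 2 = 0) (va : A ^ 2 = 0) (vb : B ^ 2 = 0)
    (vc : C ^ 2 = 0) (vd : D ^ 2 = 0) (ab : A * B = 0) (ad : A * D = 0) (bc : B * C = 0)
    (cd : C * D = 0) : (A + B + C + A * C) * (A + C + D + A * C) = 0 ∧
    (A + B + C + A * C) * (A + B + C + A * C) = (A + C + D + A * C) * (A + C + D + A * C) := by
  have t2 : 2 * (A * C) = 2 * (B * D) := by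
    clear h3
    grind
  have acbd : A * C = B * D := by linear_combination (A * C - B * D) * h3 - t2
  have t3 : 3 * (A * C) = 0 := by rw [h3, zero_mul]
  clear t t2 h3
  constructor
  · grind
  · grind

lemma c0_alg {S : Type} [CommRing S] {τ : V m → S} (h1 : ∀ x y, τ (x + y) = τ x * τ y)
    (h3 : (3 : S) = 0) (hm : 4 ≤ m)
    (hN : ∀ h : V m, h ≠ 0 → h ⬝ᵥ h = 0 → (τ h - 1) ^ 2 = 0)
    (i j : Fin m) (hij : i ≠ j) : (τ (ee i) - 1) * (τ (ee j) - 1) = 0 ∧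
    (τ (ee i) - 1) * (τ (ee i) - 1) = (τ (ee j) - 1) * (τ (ee j) - 1) := by
  have hN : ∀ (h : V m) (t : V m), h ⬝ᵥ t ≠ 0 → h ⬝ᵥ h = 0 → (τ h - 1) ^ 2 = 0 := by
    intro h t ht hh
    refine hN h ?_ hh
    rintro rfl
    simp at ht
  obtain ⟨k, l, ik, jk, il, jl, kl⟩ := two_more hm i j
  have ji := Ne.symm hij
  have ki := ik.symm
  have kj := jk.symm
  have li := il.symm
  have lj := jl.symm
  have lk := kl.symm
  obtain ⟨v, hv⟩ : ∃ v : ZMod 3 → ZMod 3 → ZMod 3 → ZMod 3 → V m,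
      ∀ a b c d, v a b c d = Pi.single i a + Pi.single j b + Pi.single k c + Pi.single l d :=
    ⟨fun a b c d => Pi.single i a + Pi.single j b + Pi.single k c + Pi.single l d,
      fun _ _ _ _ => rfl⟩
  have vadd : ∀ a b c d a' b' c' d', v a b c d + v a' b' c' d' = v (a+a') (b+b') (c+c') (d+d') := by
    intros; simp only [hv, Pi.single_add]; abel
  have vN : ∀ a b c d, a ≠ 0 ∨ b ≠ 0 → a * a + b * b + c * c + d * d = 0 →
      (τ (v a b c d) - 1) ^ 2 = 0 := by
    intro a b c d hab h
    have hh : v a b c d ⬝ᵥ v a b c d = 0 := by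
      rw [← h, hv]
      simp [hij, ik, jk, il, jl, kl, ji, ki, kj, li, lj, lk]
    rcases hab with ha | hb
    · refine hN _ (ee i) ?_ hh
      simpa [hv, hij, ik, jk, il, jl, kl, ji, ki, kj, li, lj, lk] using ha
    · refine hN _ (ee j) ?_ hh
      simpa [hv, hij, ik, jk, il, jl, kl, ji, ki, kj, li, lj, lk] using hb
  have ei : ee i = v 1 0 0 0 := by simp [hv]
  have ej : ee j = v 0 1 0 0 := by simp [hv]
  have va := vN (-1) (-1) (-1) 0 (by decide) (by decide)
  have vb := vN 0 (-1) 1 (-1) (by decide) (by decide)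
  have vc := vN (-1) (-1) 0 1 (by decide) (by decide)
  have vd := vN (-1) 0 1 (-1) (by decide) (by decide)
  have ab := prod_zero h3 va vb (by rw [← h1, vadd]; exact vN _ _ _ _ (by decide) (by decide))
  have ad := prod_zero h3 va vd (by rw [← h1, vadd]; exact vN _ _ _ _ (by decide) (by decide))
  have bc := prod_zero h3 vb vc (by rw [← h1, vadd]; exact vN _ _ _ _ (by decide) (by decide))
  have cd := prod_zero h3 vc vd (by rw [← h1, vadd]; exact vN _ _ _ _ (by decide) (by decide))
  have t := vN (-1) 0 (-1) 1 (by decide) (by decide)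
  rw [show v (-1) 0 (-1) 1 = v (-1) (-1) (-1) 0 + v 0 (-1) 1 (-1) + v (-1) (-1) 0 1 +
    (v (-1) 0 1 (-1) + v (-1) 0 1 (-1)) by simp only [vadd]; rfl] at t
  rw [show v 1 0 0 0 = v (-1) (-1) (-1) 0 + v 0 (-1) 1 (-1) + v (-1) (-1) 0 1 by
    simp only [vadd]; rfl] at ei
  rw [show v 0 1 0 0 = v (-1) (-1) (-1) 0 + v (-1) (-1) 0 1 + v (-1) 0 1 (-1) by
    simp only [vadd]; rfl] at ej
  rw [ei, ej]
  simp only [h1] at t ⊢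
  generalize τ (v (-1) (-1) (-1) 0) = a at *
  generalize τ (v 0 (-1) 1 (-1)) = b at *
  generalize τ (v (-1) (-1) 0 1) = c at *
  generalize τ (v (-1) 0 1 (-1)) = d at *
  obtain ⟨A, rfl⟩ : ∃ A, a = 1 + A := ⟨a - 1, by ring⟩
  obtain ⟨B, rfl⟩ : ∃ A, b = 1 + A := ⟨b - 1, by ring⟩
  obtain ⟨C, rfl⟩ : ∃ A, c = 1 + A := ⟨c - 1, by ring⟩
  obtain ⟨D, rfl⟩ : ∃ A, d = 1 + A := ⟨d - 1, by ring⟩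
  simp only [add_sub_cancel_left] at *
  have dd : (1 + D) * (1 + D) = 1 - D := by linear_combination vd + D * h3
  have p1 : (1 + A) * (1 + B) * (1 + C) - 1 = A + B + C + A * C := by
    linear_combination (1 + C) * ab + bc
  have p2 : (1 + A) * (1 + C) * (1 + D) - 1 = A + C + D + A * C := by
    linear_combination (1 + C) * ad + cd
  have p3 : (1 + A) * (1 + B) * (1 + C) * ((1 + D) * (1 + D)) - 1 = A + B + C + A * C - D - B * D := by
    rw [dd]
    linear_combination (1 - D) * p1 - ad - cd - C * ad
  rw [p3] at t
  rw [p1, p2]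
  exact c0_pure h3 t va vb vc vd ab ad bc cd

end HamFus

set_option linter.unusedSimpArgs false
namespace HamFus
variable {m : ℕ}

lemma agl_of_flat (π : Equiv.Perm (V m)) (h : ∀ i j, Flat π (ee i) (ee j)) :
    ∃ (A : Matrix (Fin m) (Fin m) (ZMod 3)) (b : V m), IsUnit A ∧ ∀ x, π x = A.mulVec x + b := by
  obtain ⟨A, b, hA⟩ := affine_of π h
  exact ⟨A, b, unit_of π A b hA, hA⟩

theorem full_affine (π : Equiv.Perm (V m)) (hp1 : ∀ x y, R 1 (π x) (π y) ↔ R 1 x y)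
    (hp2 : ∀ x y, R 2 (π x) (π y) ↔ R 2 x y) :
    ∃ (A : Matrix (Fin m) (Fin m) (ZMod 3)) (b : V m), IsUnit A ∧ ∀ x, π x = A.mulVec x + b := by
  obtain ⟨S, _, τ, ι, h1, _, h3, hi, hs, hF⟩ := ringPkg (π : V m → V m)
  apply agl_of_flat
  intro i j
  apply flat_of h1 hs hF
  have n0 : ∀ h : V m, h ⬝ᵥ h ≠ 0 → h ≠ 0 := by
    rintro h hh rfl
    simp at hh
  have key1 : ∀ h : V m, h ⬝ᵥ h = 1 → (τ h - 1) ^ 2 = 0 := fun h hh =>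
    line_sq h1 h3 hi hs hF (line_of_R 1 π hp1 h (n0 h (by rw [hh]; decide)) hh)
  have key2 : ∀ h : V m, h ⬝ᵥ h = 2 → (τ h - 1) ^ 2 = 0 := fun h hh =>
    line_sq h1 h3 hi hs hF (line_of_R 2 π hp2 h (n0 h (by rw [hh]; decide)) hh)
  by_cases hij : i = j
  · subst hij
    rw [← pow_two]
    exact key1 _ (by simp)
  · have ji := Ne.symm hij
    apply prod_zero h3 (key1 _ (by simp)) (key1 _ (by simp))
    rw [← h1]
    apply key2
    simp [ee, hij, ji]
    decide

lemma zero_case (hm : 4 ≤ m) (π : Equiv.Perm (V m)) (hp : ∀ x y, R 0 (π x) (π y) ↔ R 0 x y) :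
    ∃ (A : Matrix (Fin m) (Fin m) (ZMod 3)) (b : V m), IsUnit A ∧ ∀ x, π x = A.mulVec x + b := by
  obtain ⟨S, _, τ, ι, h1, _, h3, hi, hs, hF⟩ := ringPkg (π : V m → V m)
  have key : ∀ h : V m, h ≠ 0 → h ⬝ᵥ h = 0 → (τ h - 1) ^ 2 = 0 := fun h h0 hh =>
    line_sq h1 h3 hi hs hF (line_of_R 0 π hp h h0 hh)
  have alg := c0_alg h1 h3 hm key
  have i0 : Fin m := ⟨0, by omega⟩
  obtain ⟨w, hw⟩ : ∃ w : S, w = (τ (ee i0) - 1) * (τ (ee i0) - 1) := ⟨_, rfl⟩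
  have hw1 : ∀ i, (τ (ee i) - 1) * (τ (ee i) - 1) = w := by
    intro i
    by_cases h : i = i0
    · rw [hw, h]
    · rw [hw]; exact (alg i i0 h).2
  have hw2 : ∀ k, (τ (ee k) - 1) * w = 0 := by
    intro k
    obtain ⟨j, hj, _⟩ := one_more (by omega) k k
    rw [← hw1 j, ← mul_assoc, (alg k j hj).1, zero_mul]
  have hwc : ∀ x, ι w x = ι w 0 := by
    apply inv_const
    intro j x
    have h := hw2 j
    rw [← hs, sub_eq_zero.1 ((sub_one_mul (τ (ee j)) w).symm.trans h)]
  obtain ⟨u, hu⟩ : ∃ u : V m, u = - ι w 0 := ⟨_, rfl⟩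
  have sd : ∀ i x, π (x + ee i + ee i) - π (x + ee i) - π (x + ee i) + π x = -u := by
    intro i x
    have k : τ (ee i + ee i) * 1 - τ (ee i) * 1 - τ (ee i) * 1 + 1 = w := by
      rw [h1]; linear_combination hw1 i
    have := congrArg (fun s => ι s x) k
    simp only [map_add, map_sub, map_zero, Pi.add_apply, Pi.sub_apply, hs, hF, Pi.zero_apply, hwc x]
      at this
    rw [hu, neg_neg, ← this, add_assoc]
  obtain ⟨A, b, hA⟩ := affine_of (fun x => π x - (x ⬝ᵥ x) • u) (by
    intro i j x
    by_cases hij : i = j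
    · subst hij
      have h := sd i x
      have h2 : ((x + ee i + ee i) ⬝ᵥ (x + ee i + ee i)) - ((x + ee i) ⬝ᵥ (x + ee i)) -
          ((x + ee i) ⬝ᵥ (x + ee i)) + (x ⬝ᵥ x) = -1 := by
        simp only [add_dotProduct, dotProduct_add, ee_dot, if_true]
        have := three0
        linear_combination this
      have h4 := congrArg (fun c : ZMod 3 => c • u) h2
      simp only [add_smul, sub_smul, neg_smul, one_smul] at h4
      calc _ = (π (x + ee i + ee i) - π (x + ee i) - π (x + ee i) + π x) -
            (((x + ee i + ee i) ⬝ᵥ (x + ee i + ee i)) • u - ((x + ee i) ⬝ᵥ (x + ee i)) • u -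
          ((x + ee i) ⬝ᵥ (x + ee i)) • u + (x ⬝ᵥ x) • u) := by beta_reduce; abel
        _ = 0 := by rw [h, h4, sub_self]
    · have h := flat_of h1 hs hF (alg i j hij).1 x
      have h2 : ((x + ee i + ee j) ⬝ᵥ (x + ee i + ee j)) - ((x + ee i) ⬝ᵥ (x + ee i)) -
          ((x + ee j) ⬝ᵥ (x + ee j)) + (x ⬝ᵥ x) = 0 := by
        simp only [add_dotProduct, dotProduct_add, ee_dot, if_true, if_neg hij, if_neg (Ne.symm hij)]
        ring
      have h4 := congrArg (fun c : ZMod 3 => c • u) h2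
      simp only [add_smul, sub_smul, zero_smul, one_smul] at h4
      calc _ = (π (x + ee i + ee j) - π (x + ee i) - π (x + ee j) + π x) -
            (((x + ee i + ee j) ⬝ᵥ (x + ee i + ee j)) • u - ((x + ee i) ⬝ᵥ (x + ee i)) • u -
          ((x + ee j) ⬝ᵥ (x + ee j)) • u + (x ⬝ᵥ x) • u) := by beta_reduce; abel
        _ = 0 := by rw [h, h4, sub_self])
  have hA' : ∀ x, π x = A.mulVec x + b + (x ⬝ᵥ x) • u := by
    intro x; rw [← hA x]; abel
  -- singular vectors
  have sing : ∀ s : V m, s ≠ 0 → s ⬝ᵥ s = 0 → A.mulVec s ⬝ᵥ u = 0 ∧ u ⬝ᵥ u = 0 := by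
    intro s s0 hss
    have h := fun y => ((hp (y + s) y).2 ⟨by simpa using s0, by simpa using hss⟩).2
    have h' : ∀ y, A.mulVec s ⬝ᵥ A.mulVec s + 4 * (y ⬝ᵥ s) * (A.mulVec s ⬝ᵥ u) +
        4 * (y ⬝ᵥ s) * (y ⬝ᵥ s) * (u ⬝ᵥ u) = 0 := by
      intro y
      have e : π (y + s) - π y = A.mulVec s + (2 * (y ⬝ᵥ s)) • u := by
        rw [hA', hA', mulVec_add]
        have : (y + s) ⬝ᵥ (y + s) = y ⬝ᵥ y + 2 * (y ⬝ᵥ s) := by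
          simp only [add_dotProduct, dotProduct_add, hss, dotProduct_comm s y]; ring
        rw [this, add_smul]; abel
      have := h y
      rw [e] at this
      simp only [add_dotProduct, dotProduct_add, smul_dotProduct, dotProduct_smul, smul_eq_mul,
        dotProduct_comm u (A.mulVec s)] at this
      linear_combination this
    obtain ⟨t, ht⟩ := exists_dot_ne s0
    have htt := zmod3_sq ht
    have a0 := h' 0
    have a1 := h' ((t ⬝ᵥ s) • t)
    have a2 := h' (-((t ⬝ᵥ s) • t))
    simp only [zero_dotProduct, neg_dotProduct, smul_dotProduct, smul_eq_mul, htt] at a0 a1 a2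
    generalize A.mulVec s ⬝ᵥ u = p at *
    generalize u ⬝ᵥ u = q at *
    generalize A.mulVec s ⬝ᵥ A.mulVec s = r at *
    revert a0 a1 a2
    clear * -
    revert p q r
    decide
  have base : ∀ i, A.mulVec (ee i) ⬝ᵥ u = 0 ∧ u ⬝ᵥ u = 0 := by
    intro i
    obtain ⟨j, hij, _⟩ := one_more (by omega) i i
    obtain ⟨k, l, ik, jk, il, jl, kl⟩ := two_more hm i j
    have ji := Ne.symm hij
    have ki := ik.symm
    have kj := jk.symm
    have li := il.symm
    have lj := jl.symm
    have lk := kl.symm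
    have hv : ∀ a b c d : ZMod 3, a ≠ 0 ∨ b ≠ 0 → a * a + b * b + c * c + d * d = 0 →
        A.mulVec (Pi.single i a + Pi.single j b + Pi.single k c + Pi.single l d) ⬝ᵥ u = 0
          ∧ u ⬝ᵥ u = 0 := by
      intro a b c d hab h
      apply sing
      · intro h0
        rcases hab with ha | hb
        · apply ha
          have := congrFun h0 i
          simpa [hij, ik, jk, il, jl, kl, ji, ki, kj, li, lj, lk] using this
        · apply hb
          have := congrFun h0 j
          simpa [hij, ik, jk, il, jl, kl, ji, ki, kj, li, lj, lk] using this
      · rw [← h]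
        simp [hij, ik, jk, il, jl, kl, ji, ki, kj, li, lj, lk]
    have q1 := hv (-1) (-1) (-1) 0 (by decide) (by decide)
    have q2 := hv 0 (-1) 1 (-1) (by decide) (by decide)
    have q3 := hv (-1) (-1) 0 1 (by decide) (by decide)
    refine ⟨?_, q1.2⟩
    have e : ee i = (Pi.single i (-1) + Pi.single j (-1) + Pi.single k (-1) + Pi.single l 0) +
      (Pi.single i 0 + Pi.single j (-1) + Pi.single k 1 + Pi.single l (-1)) +
      (Pi.single i (-1) + Pi.single j (-1) + Pi.single k 0 + Pi.single l 1) := by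
      have e1 : (Pi.single j (-1) : V m) + Pi.single j (-1) + Pi.single j (-1) = 0 := by
        rw [← Pi.single_add, ← Pi.single_add]; exact Pi.single_zero _
      have e2 : (Pi.single i (-1) : V m) + Pi.single i (-1) = Pi.single i 1 := by
        rw [← Pi.single_add]; rfl
      have e3 : (Pi.single k (-1) : V m) + Pi.single k 1 = 0 := by
        rw [← Pi.single_add]; exact Pi.single_zero _
      have e4 : (Pi.single l (-1) : V m) + Pi.single l 1 = 0 := by
        rw [← Pi.single_add]; exact Pi.single_zero _
      simp only [Pi.single_zero]
      calc ee i = (Pi.single i 1 : V m) + 0 + 0 + 0 := by simp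
        _ = _ := by
          rw [← e2]
          nth_rewrite 1 [← e1]
          nth_rewrite 1 [← e3]
          nth_rewrite 1 [← e4]
          abel
    rw [e, mulVec_add, mulVec_add, add_dotProduct, add_dotProduct, q1.1, q2.1, q3.1]
    simp
  have quu := (base i0).2
  have all : ∀ x, A.mulVec x ⬝ᵥ u = 0 := by
    intro x
    have := inv_const (fun x => A.mulVec x ⬝ᵥ u) (by
      intro j x
      simp only [mulVec_add, add_dotProduct, (base j).1, add_zero]) x
    simpa using this
  have u0 : u = 0 := by
    by_contra hne
    obtain ⟨t, ht⟩ := exists_dot_ne hne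
    obtain ⟨x, hx⟩ := π.surjective (t + b)
    have h := hA' x
    rw [hx] at h
    have : t = A.mulVec x + (x ⬝ᵥ x) • u := by
      rw [← add_sub_cancel_right t b, h]; abel
    apply ht
    rw [this, add_dotProduct, all, smul_dotProduct, quu]; simp
  have hA2 : ∀ x, π x = A.mulVec x + b := by
    intro x; rw [hA' x, u0, smul_zero, add_zero]
  exact ⟨A, b, unit_of π A b hA2, hA2⟩

theorem one_affine (hm : 4 ≤ m) (c : ZMod 3) (π : Equiv.Perm (V m))
    (hp : ∀ x y, R c (π x) (π y) ↔ R c x y) :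
    ∃ (A : Matrix (Fin m) (Fin m) (ZMod 3)) (b : V m), IsUnit A ∧ ∀ x, π x = A.mulVec x + b := by
  have tri : c = 0 ∨ c = 1 ∨ c = 2 := by clear hp; revert c; decide
  rcases tri with rfl | rfl | rfl
  · exact zero_case hm π hp
  · obtain ⟨S, _, τ, ι, h1, _, h3, hi, hs, hF⟩ := ringPkg (π : V m → V m)
    apply agl_of_flat
    intro i j
    apply flat_of h1 hs hF
    exact c1_alg h1 h3 hm (fun h h0 hh => line_sq h1 h3 hi hs hF (line_of_R 1 π hp h h0 hh)) i j
  · obtain ⟨S, _, τ, ι, h1, _, h3, hi, hs, hF⟩ := ringPkg (π : V m → V m)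
    apply agl_of_flat
    intro i j
    apply flat_of h1 hs hF
    exact c2_alg h1 h3 (by omega) (fun h h0 hh => line_sq h1 h3 hi hs hF (line_of_R 2 π hp h h0 hh)) i j

end HamFus

namespace HamFus

lemma wt_cons {n : ℕ} (a : ZMod 3) (x : V n) :
    hammingNorm (Fin.cons a x : V (n+1)) = (if a = 0 then 0 else 1) + hammingNorm x := by
  unfold hammingNorm
  simp only [Finset.card_filter, Fin.sum_univ_succ, Fin.cons_zero, Fin.cons_succ]
  split_ifs <;> simp_all

lemma wt_le {n : ℕ} (x : V n) : hammingNorm x ≤ n := by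
  simpa using hammingNorm_le_card_fintype (x := x)

theorem count : ∀ (n : ℕ) (x : V n) (Φ : Fn),
    ∑ z : V n, Φ (hammingNorm z) (hammingNorm (x - z)) = ev (hammingNorm x) (n - hammingNorm x) Φ := by
  intro n
  induction n with
  | zero =>
    intro x Φ
    have : hammingNorm x = 0 := by have := wt_le x; omega
    rw [this]
    simp only [Fintype.sum_unique, Nat.sub_self, ev_00]
    congr 1
  | succ n ih =>
    intro x Φ
    obtain ⟨a, x, rfl⟩ : ∃ a x', x = Fin.cons a x' := ⟨x 0, Fin.tail x, (Fin.cons_self_tail x).symm⟩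
    rw [← (Fin.consEquiv (fun _ : Fin (n+1) => ZMod 3)).sum_comp]
    rw [Fintype.sum_prod_type_right]
    have sub : ∀ (b : ZMod 3) (z : V n), (Fin.cons a x : V (n+1)) - Fin.cons b z = Fin.cons (a - b) (x - z) := by
      intro b z
      ext i
      refine Fin.cases ?_ (fun i => ?_) i <;> simp
    have hsum : ∀ f : ZMod 3 → ℤ, ∑ b, f b = f 0 + f 1 + f 2 := fun f => Fin.sum_univ_three f
    have hle := wt_le x
    have tri : a = 0 ∨ a = 1 ∨ a = 2 := by clear sub; revert a; decide
    have key : ∀ z : V n, ∑ b : ZMod 3, Φ (hammingNorm ((Fin.cons b z : V (n+1))))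
        (hammingNorm ((Fin.cons a x : V (n+1)) - Fin.cons b z)) =
        if a = 0 then opB Φ (hammingNorm z) (hammingNorm (x - z)) else
          opA Φ (hammingNorm z) (hammingNorm (x - z)) := by
      intro z
      rw [hsum]
      simp only [sub, wt_cons, opA_apply, opB_apply]
      generalize hammingNorm z = p
      generalize hammingNorm (x - z) = q
      have d1 : (1 : ZMod 3) ≠ 0 := by decide
      have d2 : (2 : ZMod 3) ≠ 0 := by decide
      have d3 : (0 - 1 : ZMod 3) ≠ 0 := by decide
      have d4 : (0 - 2 : ZMod 3) ≠ 0 := by decide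
      have d5 : (1 - 2 : ZMod 3) ≠ 0 := by decide
      have d6 : (2 - 1 : ZMod 3) ≠ 0 := by decide
      rcases tri with rfl | rfl | rfl
      · simp only [sub_self, if_true, if_neg d1, if_neg d2, if_neg d3, if_neg d4, zero_add,
          add_comm 1]
        ring
      · simp only [sub_self, sub_zero, if_true, if_neg d1, if_neg d2, if_neg d5, zero_add,
          add_comm 1]
        ring
      · simp only [sub_self, sub_zero, if_true, if_neg d1, if_neg d2, if_neg d6, zero_add,
          add_comm 1]
        ring
    refine (Finset.sum_congr rfl (fun z _ => key z)).trans ?_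
    by_cases ha : a = 0
    · simp only [if_pos ha]
      rw [ih, wt_cons, if_pos ha, zero_add, Nat.succ_sub hle, ev_succ_right]
    · simp only [if_neg ha]
      rw [ih, wt_cons, if_neg ha, add_comm 1, Nat.add_sub_add_right, ev_succ_left]

variable {m : ℕ}

/-- basic fusion relation of a permutation -/
def brel (π : Equiv.Perm (V m)) (i j : ℕ) : Prop :=
  ∃ x y, i = hammingNorm (π x - π y) ∧ j = hammingNorm (x - y)

/-- the fusion equivalence relation -/
def frel (π : Equiv.Perm (V m)) : ℕ → ℕ → Prop := Relation.EqvGen (brel π)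

lemma frel_inv {X : Type*} (π : Equiv.Perm (V m)) (g : ℕ → X)
    (hg : ∀ x y, g (hammingNorm (π x - π y)) = g (hammingNorm (x - y))) {i j : ℕ}
    (h : frel π i j) : g i = g j := by
  induction h with
  | rel i j h =>
    obtain ⟨x, y, rfl, rfl⟩ := h
    exact hg x y
  | refl => rfl
  | symm _ _ _ ih => exact ih.symm
  | trans _ _ _ _ _ ih1 ih2 => exact ih1.trans ih2

lemma count2 (x y : V m) (Φ : Fn) : ∑ z : V m, Φ (hammingNorm (z - y)) (hammingNorm (x - z)) =
    ev (hammingNorm (x - y)) (m - hammingNorm (x - y)) Φ := by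
  rw [← count, ← Equiv.sum_comp (Equiv.addRight y) (fun z => Φ (hammingNorm (z - y)) (hammingNorm (x - z)))]
  apply Finset.sum_congr rfl
  intro z _
  simp only [Equiv.coe_addRight, add_sub_cancel_right]
  rw [show x - (z + y) = x - y - z by abel]

theorem frel_coh (π : Equiv.Perm (V m)) : Coh m (frel π) where
  equiv := Relation.EqvGen.is_equivalence _
  zero := by
    intro j h
    have := frel_inv π (fun i => i = 0) (by
      intro x y
      simp [hammingNorm_eq_zero, sub_eq_zero]) h
    simpa using this
  conv := by
    intro Φ hΦ i j _ _ h
    refine frel_inv π (fun i => ev i (m - i) Φ) ?_ h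
    intro x y
    beta_reduce
    rw [← count2, ← count2, ← Equiv.sum_comp π]
    apply Finset.sum_congr rfl
    intro z _
    exact hΦ _ _ _ _ (Relation.EqvGen.rel _ _ ⟨z, y, rfl, rfl⟩) (Relation.EqvGen.rel _ _ ⟨x, z, rfl, rfl⟩)

lemma wt_dot (x : V m) : ((hammingNorm x : ℕ) : ZMod 3) = x ⬝ᵥ x := by
  unfold hammingNorm
  rw [Finset.card_filter, Nat.cast_sum]
  apply Finset.sum_congr rfl
  intro i _
  have : ∀ a : ZMod 3, ((if a ≠ 0 then 1 else 0 : ℕ) : ZMod 3) = a * a := by decide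
  exact this (x i)

lemma wt_surj (i : ℕ) (hi : i ≤ m) : ∃ x : V m, hammingNorm x = i := by
  refine ⟨fun k => if k.val < i then 1 else 0, ?_⟩
  unfold hammingNorm
  simp [Fin.card_filter_val_lt, hi]

lemma per_mod {r : ℕ → ℕ → Prop} (he : Equivalence r) (h : Per r m) : ∀ i, 1 ≤ i → i ≤ m →
    ∃ j, 1 ≤ j ∧ j ≤ 3 ∧ r i j ∧ (i : ZMod 3) = j := by
  intro i
  induction i using Nat.strong_induction_on with
  | _ i ih =>
    intro h1 h2
    by_cases h3 : i ≤ 3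
    · exact ⟨i, h1, h3, he.refl i, rfl⟩
    · obtain ⟨j, a, b, c, d⟩ := ih (i - 3) (by omega) (by omega) (by omega)
      have := h (i - 3) (by omega) (by omega)
      rw [show i - 3 + 3 = i by omega] at this
      refine ⟨j, a, b, he.trans (he.symm this) c, ?_⟩
      rw [← d, show (i : ZMod 3) = ((i - 3 + 3 : ℕ) : ZMod 3) by congr 1; omega, Nat.cast_add]
      have : ((3 : ℕ) : ZMod 3) = 0 := rfl
      rw [this, add_zero]

/-- main geometric consequence -/
theorem affine_of_inv (π : Equiv.Perm (V m)) (P : ℕ → ZMod 2)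
    (hP : ∀ x y, P (hammingNorm (π x - π y)) = P (hammingNorm (x - y)))
    (hnc : ∃ i j, 1 ≤ i ∧ i ≤ m ∧ 1 ≤ j ∧ j ≤ m ∧ P i ≠ P j) :
    ∃ (A : Matrix (Fin m) (Fin m) (ZMod 3)) (b : V m), IsUnit A ∧ ∀ x, π x = A.mulVec x + b := by
  have hinv : ∀ i j, frel π i j → P i = P j := fun i j h => frel_inv π P hP h
  have he := (frel_coh π).equiv
  rcases (frel_coh π).main with h | h | ⟨h, hm⟩
  · have iso : ∀ x y, hammingNorm (π x - π y) = hammingNorm (x - y) := fun x y =>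
      h _ _ (wt_le _) (wt_le _) (Relation.EqvGen.rel _ _ ⟨x, y, rfl, rfl⟩)
    apply full_affine
    · intro x y
      rw [R_of 1 (by decide), R_of 1 (by decide), ← wt_dot, ← wt_dot, iso]
    · intro x y
      rw [R_of 2 (by decide), R_of 2 (by decide), ← wt_dot, ← wt_dot, iso]
  · obtain ⟨i, j, hi, hi', hj, hj', hne⟩ := hnc
    exact absurd ((hinv _ _ (h i hi hi')).symm.trans (hinv _ _ (h j hj hj'))) hne
  · -- P as function of residue
    obtain ⟨p, hp⟩ : ∃ p : ZMod 3 → ZMod 2, ∀ i, 1 ≤ i → i ≤ m → P i = p i := by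
      refine ⟨fun c => if c = 0 then P 3 else if c = 1 then P 1 else P 2, fun i h1 h2 => ?_⟩
      obtain ⟨j, a, b, c, d⟩ := per_mod he h i h1 h2
      rw [hinv _ _ c]
      simp only [d]
      have : j = 1 ∨ j = 2 ∨ j = 3 := by omega
      rcases this with rfl | rfl | rfl
      · rfl
      · rfl
      · rfl
    have pne : ∃ a b, p a ≠ p b := by
      obtain ⟨i, j, hi, hi', hj, hj', hne⟩ := hnc
      rw [hp i hi hi', hp j hj hj'] at hne
      exact ⟨_, _, hne⟩
    have odd : ∃ (c : ZMod 3) (e : ZMod 2), ∀ a, p a = e ↔ a = c := by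
      clear hp
      revert p
      decide
    obtain ⟨c, e, hc⟩ := odd
    have hR : ∀ x y : V m, R c x y ↔ x ≠ y ∧ P (hammingNorm (x - y)) = e := by
      intro x y
      unfold R
      apply and_congr_right
      intro hxy
      have : hammingNorm (x - y) ≠ 0 := by
        rw [hammingNorm_ne_zero_iff]; exact sub_ne_zero.2 hxy
      rw [hp _ (by omega) (wt_le _), hc, wt_dot]
    apply one_affine hm c
    intro x y
    rw [hR, hR, hP, π.injective.ne_iff]

end HamFus

namespace HamFus
open Polynomial
open scoped Classical

section
variable {m : ℕ} {K : Type} [Field K] [CharP K 2] {α : K}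

lemma psi_add (hα : IsPrimitiveRoot α 3) (a b : ZMod 3) :
    α ^ (a + b).val = α ^ a.val * α ^ b.val := by
  rw [← pow_add, ZMod.val_add, ← pow_mod_orderOf α (a.val + b.val), hα.eq_orderOf.symm]

lemma psi_sum (hα : IsPrimitiveRoot α 3) {ι : Type*} (s : Finset ι) (f : ι → ZMod 3) :
    α ^ (∑ k ∈ s, f k).val = ∏ k ∈ s, α ^ (f k).val := by
  induction s using Finset.induction_on with
  | empty => simp
  | insert a s ha ih => rw [Finset.sum_insert ha, Finset.prod_insert ha, psi_add hα, ih]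

lemma psi_three (hα : IsPrimitiveRoot α 3) : α + α ^ 2 = 1 := by
  have h := hα.geom_sum_eq_zero (by norm_num)
  simp [Finset.sum_range_succ] at h
  have h2 : (2 : K) = 0 := CharTwo.two_eq_zero
  linear_combination h - h2

/-- generating polynomial identity -/
lemma gen_poly (hα : IsPrimitiveRoot α 3) (z : V m) :
    ∑ j : V m, (X : K[X]) ^ hammingNorm j * C (α ^ (∑ k, z k * j k).val) =
      (1 + X) ^ hammingNorm z := by
  have h1 : ∀ j : V m, (X : K[X]) ^ hammingNorm j * C (α ^ (∑ k, z k * j k).val) =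
      ∏ k, ((if j k = 0 then 1 else X) * C (α ^ (z k * j k).val)) := by
    intro j
    rw [psi_sum hα, map_prod, Finset.prod_mul_distrib]
    congr 1
    unfold hammingNorm
    rw [Finset.prod_ite, Finset.prod_const_one, one_mul, Finset.prod_const]
  have h2 : ∀ c : ZMod 3, ∑ b : ZMod 3, ((if b = 0 then 1 else X) * C (α ^ (c * b).val) : K[X]) =
      if c = 0 then 1 else 1 + X := by
    intro c
    have hs : ∀ f : ZMod 3 → K[X], ∑ b, f b = f 0 + f 1 + f 2 := fun f => Fin.sum_univ_three f
    have e2 : (2 : K[X]) = 0 := CharTwo.two_eq_zero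
    have e3 : (C α + C α ^ 2 : K[X]) = 1 := by rw [← C_pow, ← C_add, psi_three hα, C_1]
    have tri : c = 0 ∨ c = 1 ∨ c = 2 := by revert c; decide
    have d1 : (1 : ZMod 3) ≠ 0 := by decide
    have d2 : (2 : ZMod 3) ≠ 0 := by decide
    have v1 : (1 * 1 : ZMod 3).val = 1 := by decide
    have v2 : (1 * 2 : ZMod 3).val = 2 := by decide
    have v3 : (2 * 1 : ZMod 3).val = 2 := by decide
    have v4 : (2 * 2 : ZMod 3).val = 1 := by decide
    rw [hs]
    rcases tri with rfl | rfl | rfl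
    · simp only [zero_mul, ZMod.val_zero, pow_zero, C_1, if_true, if_neg d1, if_neg d2]
      linear_combination X * e2
    · simp only [mul_zero, ZMod.val_zero, pow_zero, C_1, if_true, if_neg d1, if_neg d2, v1, v2,
        pow_one, C_pow]
      linear_combination X * e3
    · simp only [mul_zero, ZMod.val_zero, pow_zero, C_1, if_true, if_neg d1, if_neg d2, v3, v4,
        pow_one, C_pow]
      linear_combination X * e3
  rw [Finset.sum_congr rfl (fun j _ => h1 j)]
  have h3 := Finset.prod_univ_sum (fun _ : Fin m => (Finset.univ : Finset (ZMod 3)))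
    (fun k b => ((if b = 0 then 1 else X) * C (α ^ (z k * b).val) : K[X]))
  rw [Fintype.piFinset_univ] at h3
  rw [← h3, Finset.prod_congr rfl (fun k _ => h2 (z k))]
  unfold hammingNorm
  rw [Finset.prod_ite, Finset.prod_const_one, one_mul, Finset.prod_const]

lemma kraw (hα : IsPrimitiveRoot α 3) (z : V m) (w : ℕ) :
    ∑ j : V m, (if hammingNorm j = w then α ^ (∑ k, z k * j k).val else 0) =
      ((hammingNorm z).choose w : K) := by
  have h := congrArg (fun p : K[X] => p.coeff w) (gen_poly hα z)
  simp only [finset_sum_coeff, coeff_one_add_X_pow] at h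
  rw [← h]
  apply Finset.sum_congr rfl
  intro j _
  rw [mul_comm, coeff_C_mul_X_pow]
  simp only [eq_comm]

lemma orth (hα : IsPrimitiveRoot α 3) (z : V m) :
    ∑ j : V m, α ^ (∑ k, z k * j k).val = if z = 0 then 1 else 0 := by
  have h := congrArg (fun p : K[X] => p.eval 1) (gen_poly hα z)
  have h2 : (1 + 1 : K) = 0 := CharTwo.add_self_eq_zero 1
  simp only [eval_finset_sum, eval_mul, eval_pow, eval_X, one_pow, eval_C, one_mul, eval_add,
    eval_one, h2, zero_pow_eq, hammingNorm_eq_zero] at h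
  exact h

/-- weight kernel -/
noncomputable def ker (m : ℕ) (W : Set ℕ) (n : ℕ) : ZMod 2 :=
  ∑ w ∈ Finset.range (m + 1), if w ∈ W then (n.choose w : ZMod 2) else 0

lemma phi_eq (a : ZMod 2) : (if a = 1 then (1 : K) else 0) = ZMod.castHom (dvd_refl 2) K a := by
  have tri : a = 0 ∨ a = 1 := by revert a; decide
  rcases tri with rfl | rfl
  · simp
  · simp

lemma ker_eq (hα : IsPrimitiveRoot α 3) (W : Set ℕ) (z : V m) :
    ZMod.castHom (dvd_refl 2) K (ker m W (hammingNorm z)) =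
      ∑ j : V m, if hammingNorm j ∈ W then α ^ (∑ k, z k * j k).val else 0 := by
  unfold ker
  rw [map_sum]
  have : ∀ w, ZMod.castHom (dvd_refl 2) K (if w ∈ W then ((hammingNorm z).choose w : ZMod 2) else 0)
      = ∑ j : V m, if hammingNorm j = w then (if w ∈ W then α ^ (∑ k, z k * j k).val else 0) else 0 := by
    intro w
    by_cases hw : w ∈ W
    · simp only [if_pos hw, kraw hα, map_natCast]
    · simp [hw]
  rw [Finset.sum_congr rfl (fun w _ => this w), Finset.sum_comm]
  apply Finset.sum_congr rfl
  intro j _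
  rw [Finset.sum_ite_eq, if_pos (Finset.mem_range.2 (Nat.lt_succ_of_le (wt_le j)))]

lemma dot_add (x y j : V m) : ∑ k, (x + y) k * j k = ∑ k, x k * j k + ∑ k, y k * j k := by
  simp [add_mul, Finset.sum_add_distrib]

lemma wt_neg (x : V m) : hammingNorm (-x) = hammingNorm x := by
  simp [hammingNorm]

lemma col_mem (hα : IsPrimitiveRoot α 3) (W : Set ℕ) (y : V m) :
    (fun x : V m => ker m W (hammingNorm (x - y))) ∈ abelianCode 3 m W K α := by
  intro i hi
  simp only [phi_eq, ker_eq hα, Finset.sum_mul]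
  rw [Finset.sum_comm]
  apply Finset.sum_eq_zero
  intro j _
  by_cases hj : hammingNorm j ∈ W
  · simp only [if_pos hj]
    have h1 : ∀ x : V m, α ^ (∑ k, (x - y) k * j k).val * α ^ (∑ k, x k * i k).val =
        α ^ (∑ k, (i + j) k * x k).val * α ^ (∑ k, (-y) k * j k).val := by
      intro x
      rw [← psi_add hα, ← psi_add hα]
      congr 2
      rw [sub_eq_add_neg, dot_add, dot_add]
      simp only [mul_comm (x _)]
      ring
    rw [Finset.sum_congr rfl (fun x _ => h1 x), ← Finset.sum_mul, orth hα, if_neg, zero_mul]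
    intro h0
    apply hi
    rw [eq_neg_of_add_eq_zero_left h0, wt_neg]
    exact hj
  · simp [hj]

lemma repro (hα : IsPrimitiveRoot α 3) (W : Set ℕ) {a : V m → ZMod 2}
    (ha : a ∈ abelianCode 3 m W K α) (x : V m) :
    ∑ y, ker m W (hammingNorm (x - y)) * a y = a x := by
  apply (ZMod.castHom (dvd_refl 2) K).injective
  rw [map_sum]
  simp only [map_mul, ker_eq hα, Finset.sum_mul]
  rw [Finset.sum_comm]
  have h1 : ∀ j : V m, ∑ y, (if hammingNorm j ∈ W then α ^ (∑ k, (x - y) k * j k).val else 0) *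
      ZMod.castHom (dvd_refl 2) K (a y) =
      ∑ y, α ^ (∑ k, (x - y) k * j k).val * ZMod.castHom (dvd_refl 2) K (a y) := by
    intro j
    by_cases hj : hammingNorm j ∈ W
    · simp only [if_pos hj]
    · simp only [if_neg hj, zero_mul, Finset.sum_const_zero]
      have h := ha (-j) (by rw [wt_neg]; exact hj)
      simp only [phi_eq] at h
      have h2 : ∀ y, α ^ (∑ k, (x - y) k * j k).val * ZMod.castHom (dvd_refl 2) K (a y) =
          α ^ (∑ k, x k * j k).val *
          (ZMod.castHom (dvd_refl 2) K (a y) * α ^ (∑ k, y k * (-j) k).val) := by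
        intro y
        rw [sub_eq_add_neg, dot_add, psi_add hα]
        simp only [Pi.neg_apply, neg_mul, mul_neg]
        ring
      rw [Finset.sum_congr rfl (fun y _ => h2 y), ← Finset.mul_sum, h, mul_zero]
  rw [Finset.sum_congr rfl (fun j _ => h1 j), Finset.sum_comm]
  simp only [← Finset.sum_mul, orth hα, sub_eq_zero, ite_mul, one_mul, zero_mul]
  rw [Finset.sum_ite_eq, if_pos (Finset.mem_univ _)]

lemma aut_mem {I : Type} {C : Set (I → ZMod 2)} {π : Equiv.Perm I} (h : π ∈ codeAut C)
    {a : I → ZMod 2} (ha : a ∈ C) : a ∘ π.symm ∈ C ∧ a ∘ π ∈ C := by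
  have h : (fun c : I → ZMod 2 => c ∘ ⇑π.symm) '' C = C := h
  constructor
  · rw [← h]; exact ⟨a, ha, rfl⟩
  · rw [← h] at ha
    obtain ⟨c, hc, rfl⟩ := ha
    have : (c ∘ ⇑π.symm) ∘ ⇑π = c := by ext x; simp
    simpa only [this] using hc

theorem ker_inv (hα : IsPrimitiveRoot α 3) (W : Set ℕ) (π : Equiv.Perm (V m))
    (h : π ∈ codeAut (abelianCode 3 m W K α)) (x y : V m) :
    ker m W (hammingNorm (π x - π y)) = ker m W (hammingNorm (x - y)) := by
  have sy : ∀ u v : V m, hammingNorm (u - v) = hammingNorm (v - u) := by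
    intro u v; rw [← wt_neg, neg_sub]
  have e1 := repro hα W (aut_mem h (col_mem hα W (π y))).2 x
  have e2 := repro hα W (aut_mem h (col_mem hα W x)).1 (π y)
  simp only [Function.comp] at e1 e2
  rw [← Equiv.sum_comp π] at e2
  simp only [Equiv.symm_apply_apply] at e2
  rw [← e1, sy x y, ← e2]
  apply Finset.sum_congr rfl
  intro z _
  rw [mul_comm, sy (π z), sy x z]

end

lemma ker_nonconst (m : ℕ) (hm : 1 ≤ m) (W : Set ℕ) (hW : W ⊆ Set.Iic m) (hb : ¬ BoundaryW m W) :
    ∃ i j, 1 ≤ i ∧ i ≤ m ∧ 1 ≤ j ∧ j ≤ m ∧ ker m W i ≠ ker m W j := by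
  by_contra hcon
  push Not at hcon
  apply hb
  obtain ⟨f, hf⟩ : ∃ f : ℕ → ZMod 2, ∀ w, f w = if w ∈ W then 1 else 0 := ⟨_, fun _ => rfl⟩
  obtain ⟨c, hc⟩ : ∃ c, c = ker m W 1 := ⟨_, rfl⟩
  have hk : ∀ n, 1 ≤ n → n ≤ m → ∑ w ∈ Finset.range (n + 1), f w * (n.choose w : ZMod 2) = c := by
    intro n h1 h2
    rw [hc, ← hcon n 1 h1 h2 le_rfl hm]
    unfold ker
    rw [← Finset.sum_subset (Finset.range_mono (Nat.succ_le_succ h2))]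
    · apply Finset.sum_congr rfl
      intro w _
      rw [hf]; split_ifs <;> simp
    · intro w _ hw
      have : n < w := by simpa [Nat.lt_succ_iff] using hw
      simp [Nat.choose_eq_zero_of_lt this]
  have hg : ∀ n, 1 ≤ n →
      ∑ w ∈ Finset.range (n + 1), ((c + f 0) + if w = 0 then c else 0) * (n.choose w : ZMod 2) = c := by
    intro n h1
    simp only [add_mul, Finset.sum_add_distrib, ← Finset.mul_sum, ite_mul, zero_mul]
    rw [← Nat.cast_sum, Nat.sum_range_choose, Finset.sum_ite_eq' ]
    have : ((2 ^ n : ℕ) : ZMod 2) = 0 := by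
      rw [Nat.cast_pow]
      exact zero_pow (by omega)
    simp [this, ← add_mul]
  have hfg : ∀ n, n ≤ m → f n = (c + f 0) + if n = 0 then c else 0 := by
    intro n
    induction n using Nat.strong_induction_on with
    | _ n ih =>
      intro hn
      by_cases h0 : n = 0
      · subst h0
        have h2 : c + c = 0 := CharTwo.add_self_eq_zero c
        rw [if_pos rfl]
        linear_combination -h2
      · have a1 := hk n (by omega) hn
        have a2 := hg n (by omega)
        rw [Finset.sum_range_succ, Nat.choose_self, Nat.cast_one, mul_one] at a1 a2
        rw [Finset.sum_congr rfl (fun w hw => by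
          rw [ih w (Finset.mem_range.1 hw) (by have := Finset.mem_range.1 hw; omega)])] at a1
        linear_combination a1 - a2
  have hcst : ∀ n, 1 ≤ n → n ≤ m → (n ∈ W ↔ 1 ∈ W) := by
    intro n h1 h2
    have e1 := hfg n h2
    have e2 := hfg 1 hm
    rw [if_neg (by omega)] at e1 e2
    have : f n = f 1 := by rw [e1, e2]
    rw [hf, hf] at this
    by_cases p : n ∈ W <;> by_cases q : 1 ∈ W
    · exact ⟨fun _ => q, fun _ => p⟩
    · simp [p, q] at this
    · simp [p, q] at this
    · exact ⟨fun h => absurd h p, fun h => absurd h q⟩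
  unfold BoundaryW
  by_cases p : 0 ∈ W <;> by_cases q : 1 ∈ W
  · right; right; right
    ext n
    refine ⟨fun h => hW h, fun h => ?_⟩
    rcases Nat.eq_zero_or_pos n with rfl | hn
    · exact p
    · exact (hcst n hn h).2 q
  · right; left
    ext n
    refine ⟨fun h => ?_, fun h => ?_⟩
    · rcases Nat.eq_zero_or_pos n with rfl | hn
      · rfl
      · exact absurd ((hcst n hn (hW h)).1 h) q
    · rw [Set.mem_singleton_iff] at h
      rw [h]; exact p
  · right; right; left
    ext n
    refine ⟨fun h => ⟨?_, hW h⟩, fun h => (hcst n h.1 h.2).2 q⟩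
    rcases Nat.eq_zero_or_pos n with rfl | hn
    · exact absurd h p
    · exact hn
  · left
    ext n
    refine ⟨fun h => ?_, fun h => absurd h (Set.notMem_empty n)⟩
    rcases Nat.eq_zero_or_pos n with rfl | hn
    · exact absurd h p
    · exact absurd ((hcst n hn (hW h)).1 h) q

lemma aut_univ {I : Type} {C : Set (I → ZMod 2)}
    (h : ∀ (π : Equiv.Perm I) (a), a ∈ C → a ∘ π ∈ C) : codeAut C = Set.univ := by
  ext π
  refine ⟨fun _ => Set.mem_univ _, fun _ => ?_⟩
  show (fun c : I → ZMod 2 => c ∘ ⇑π.symm) '' C = C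
  ext a
  constructor
  · rintro ⟨c, hc, rfl⟩
    exact h π.symm c hc
  · intro ha
    refine ⟨a ∘ π, h π a ha, ?_⟩
    ext x; simp

theorem boundary_part (m : ℕ) (hm : 1 ≤ m) (W : Set ℕ)
    (K : Type) [Field K] [CharP K 2] (α : K) (hα : IsPrimitiveRoot α 3) (hB : BoundaryW m W) :
    codeAut (abelianCode 3 m W K α) = Set.univ := by
  apply aut_univ
  intro π a ha
  have hr := repro hα W ha
  rcases hB with rfl | rfl | rfl | rfl
  · have : a = 0 := by
      ext x; rw [← hr x]; simp [ker]
    have h2 : a ∘ π = a := by rw [this]; rfl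
    rw [h2]; exact ha
  · have : ∀ x, a x = ∑ y, a y := by
      intro x; rw [← hr x]; simp [ker]
    have h2 : a ∘ π = a := by
      ext x; simp only [Function.comp]; rw [this, this x]
    rw [h2]; exact ha
  · intro j hj
    have j0 : j = 0 := by
      by_contra hne
      apply hj
      have : hammingNorm j ≠ 0 := hammingNorm_ne_zero_iff.2 hne
      exact ⟨by omega, wt_le j⟩
    have h := ha j hj
    subst j0
    simp only [Pi.zero_apply, mul_zero, Finset.sum_const_zero, ZMod.val_zero, pow_zero, mul_one] at h ⊢
    exact (Equiv.sum_comp π (fun i => if a i = 1 then (1 : K) else 0)).trans h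
  · intro j hj
    exact absurd (wt_le j) hj

end HamFus

theorem statement2 (m : ℕ) (hm : 1 ≤ m) (W : Set ℕ) (hW : W ⊆ Set.Iic m)
    (K : Type) [Field K] [CharP K 2] (α : K) (hα : IsPrimitiveRoot α 3) :
    (¬ BoundaryW m W → codeAut (abelianCode 3 m W K α) ⊆ aglSet m) ∧
    (BoundaryW m W → codeAut (abelianCode 3 m W K α) = Set.univ) := by
  refine ⟨fun hb π hπ => ?_, fun hB => HamFus.boundary_part m hm W K α hα hB⟩
  exact HamFus.affine_of_inv π (HamFus.ker m W) (HamFus.ker_inv hα W π hπ)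
    (HamFus.ker_nonconst m hm W hW hb)
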